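/- arXiv:2411.14791 — 5 statements merged into one kernel-verified Lean document; each statement's English description precedes it below -/
import Mathlib

section
/- Let (H, Σ, Υ, Φ) be an expanding gluing data with parameters m, k ≥ 2 satisfying the condition that for any two distinct labels j, ℓ ∈ {1,…,k} the edges Φ(j) and Φ(ℓ) are disjoint as subsets of V(H). Let F̂ be the induced rational self-map of ℙ^{2^k−1} and M_e the invariant manifold. Then quadratic attraction holds: if at a point ξ ∈ ℙ^{2^k−1} each of the defining equations [x] = ∏_{j: x_j=1} [e_j] of M_e is satisfied up to an additive error of order O(ε), then at F̂(ξ) each defining equation is satisfied up to an additive error of order O(ε²). Precisely, for every point ζ of M_e at which F̂ is defined there are a neighborhood U of ζ and constants C > 0, ε_0 > 0 such that: for all ξ ∈ U and 0 < ε ≤ ε_0, if every defining equation of M_e holds at ξ with error at most ε, then every defining equation of M_e holds at F̂(ξ) with error at most C·ε². -/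
open scoped Classical
open Finset Filter

noncomputable section

/-- A finite multigraph: a finite vertex type together with a multiset of
(unordered) edges. -/
structure MGraph where
  V : Type
  fin : Fintype V
  E : Multiset (Sym2 V)

attribute [instance] MGraph.fin

namespace MGraph

/-- A `{0,1}`-vertex assignment is independent if no two vertices assigned `1`
form an edge. -/
def Indep (G : MGraph) (σ : G.V → Bool) : Prop :=
  ∀ v w : G.V, s(v, w) ∈ G.E → ¬(σ v = true ∧ σ w = true)

/-- The number of vertices assigned `1`. -/
def ones (G : MGraph) (σ : G.V → Bool) : ℕ :=
  (Finset.univ.filter fun v => σ v = true).card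

/-- The degree of a vertex: the number of adjacent edges. -/
def degree (G : MGraph) (v : G.V) : ℕ :=
  (G.E.filter fun e => v ∈ e).card

/-- A singleton graph: one vertex, no edges. -/
def IsSingleton (G : MGraph) : Prop :=
  (∀ v w : G.V, v = w) ∧ G.E = 0

/-- Connectivity of a multigraph. -/
def Connected (G : MGraph) : Prop :=
  ∀ v w : G.V, Relation.ReflTransGen (fun a b => s(a, b) ∈ G.E) v w

/-- The underlying simple graph of a multigraph. -/
def toSimple (G : MGraph) : SimpleGraph G.V where
  Adj v w := v ≠ w ∧ s(v, w) ∈ G.E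
  symm := ⟨fun v w h => ⟨h.1.symm, by rw [Sym2.eq_swap]; exact h.2⟩⟩
  loopless := ⟨fun v h => h.1 rfl⟩

/-- A finite set of vertices is independent if no two of its members form an edge. -/
def IndepFinset (G : MGraph) (I : Finset G.V) : Prop :=
  ∀ v ∈ I, ∀ w ∈ I, s(v, w) ∉ G.E

end MGraph

/-- The conditioned independence polynomial `Z_G(λ, x)` of a multigraph with
marked vertices, evaluated in any commutative ring at `lam`. -/
def Zcond {k : ℕ} (R : Type) [CommRing R] (lam : R) (G : MGraph)
    (marks : Fin k → G.V) (x : Fin k → Bool) : R :=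
  ∑ σ : G.V → Bool,
    if G.Indep σ ∧ (∀ j, σ (marks j) = x j) then lam ^ G.ones σ else 0

/-- The (full) independence polynomial `Z_G(λ)`. -/
def Zfull (R : Type) [CommRing R] (lam : R) (G : MGraph) : R :=
  ∑ σ : G.V → Bool, if G.Indep σ then lam ^ G.ones σ else 0

/-- A multigraph with `k` marked vertices labeled `1, …, k`. -/
structure MarkedGraph (k : ℕ) where
  G : MGraph
  mark : Fin k → G.V

/-- `Z_G(λ, x)` for a marked graph. -/
def MarkedGraph.Z {k : ℕ} (R : Type) [CommRing R] (lam : R)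
    (A : MarkedGraph k) (x : Fin k → Bool) : R :=
  Zcond R lam A.G A.mark x

/-- The all-zeros tuple `(0, …, 0)`. -/
def zeroT (k : ℕ) : Fin k → Bool := fun _ => false

/-- The all-ones tuple `(1, …, 1)`. -/
def oneT (k : ℕ) : Fin k → Bool := fun _ => true

/-- The `j`-th standard basis tuple `e_j`. -/
def unitT {k : ℕ} (j : Fin k) : Fin k → Bool := fun i => if i = j then true else false

/-- The number of `1`-entries of a binary tuple. -/
def wt {k : ℕ} (x : Fin k → Bool) : ℕ := (Finset.univ.filter fun j => x j = true).card

/-- A set of vertices agrees with a binary tuple `x` when it contains the marked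
vertex labeled `j` iff `x j = 1`. -/
def Agrees {k : ℕ} (A : MarkedGraph k) (I : Finset A.G.V) (x : Fin k → Bool) : Prop :=
  ∀ j, A.mark j ∈ I ↔ x j = true

/-- A marked graph is maximally independent if for each binary tuple `x` there is a
unique independent set of maximal cardinality agreeing with `x`, and moreover
`#I(1,…,1) = #I(0,…,0) + k`. -/
def MaxIndependent {k : ℕ} (A : MarkedGraph k) : Prop :=
  (∀ x : Fin k → Bool, ∃ I : Finset A.G.V,
    (A.G.IndepFinset I ∧ Agrees A I x) ∧
    (∀ J, A.G.IndepFinset J ∧ Agrees A J x → J.card ≤ I.card) ∧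
    (∀ J, A.G.IndepFinset J ∧ Agrees A J x → J.card = I.card → J = I)) ∧
  (∀ I₁ I₀ : Finset A.G.V,
    ((A.G.IndepFinset I₁ ∧ Agrees A I₁ (oneT k)) ∧
      ∀ J, A.G.IndepFinset J ∧ Agrees A J (oneT k) → J.card ≤ I₁.card) →
    ((A.G.IndepFinset I₀ ∧ Agrees A I₀ (zeroT k)) ∧
      ∀ J, A.G.IndepFinset J ∧ Agrees A J (zeroT k) → J.card ≤ I₀.card) →
    I₁.card = I₀.card + k)

/-- Gluing data `(H, Σ, Υ, Φ)` with parameters `m, k`: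
a gluing scheme `H` (a labeled multi-hypergraph on `m` vertices, each vertex lying
in exactly one edge of each of the `k` labels), connecting graphs `Σ_e` with roots,
attaching maps `Υ_e`, and an injective labeling map `Φ`. -/
structure GluingData (m k : ℕ) where
  /-- index type for the edge multi-set of the gluing scheme `H` -/
  EIdx : Type
  efin : Fintype EIdx
  /-- the vertex set of an edge of `H` -/
  edge : EIdx → Finset (Fin m)
  edge_nonempty : ∀ e, (edge e).Nonempty
  /-- the label of an edge -/
  label : EIdx → Fin k
  /-- for each label `j`, the edges labeled `j` partition the vertex set of `H` -/
  mem_unique : ∀ (j : Fin k) (i : Fin m), ∃! e : EIdx, label e = j ∧ i ∈ edge e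
  /-- the connecting graphs `Σ_e` -/
  Sig : EIdx → MGraph
  Sig_nonempty : ∀ e, Nonempty (Sig e).V
  Sig_connected : ∀ e, (Sig e).Connected
  /-- the root of `Σ_e` -/
  root : (e : EIdx) → (Sig e).V
  /-- the attaching maps `Υ_e` (only their values on members of `e` matter) -/
  att : (e : EIdx) → Fin m → (Sig e).V
  /-- the labeling map `Φ` -/
  Phi : Fin k → EIdx
  Phi_inj : Function.Injective Phi

attribute [instance] GluingData.efin

namespace GluingData

variable {m k : ℕ}

/-- Disjoint union of the `m` copies of `A` and of the connecting graphs. -/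
def Carrier (D : GluingData m k) (A : MarkedGraph k) : Type :=
  (Fin m × A.G.V) ⊕ (Σ e : D.EIdx, (D.Sig e).V)

instance (D : GluingData m k) (A : MarkedGraph k) : Fintype (D.Carrier A) := by
  unfold Carrier; infer_instance

/-- The gluing identifications: the marked vertex labeled `ℓ(e)` of the copy `i ∈ e`
is identified with `Υ_e(w_i)` in `Σ_e`. -/
def glueRel (D : GluingData m k) (A : MarkedGraph k) :
    D.Carrier A → D.Carrier A → Prop := fun a b =>
  ∃ (e : D.EIdx) (i : Fin m), i ∈ D.edge e ∧
    a = Sum.inl (i, A.mark (D.label e)) ∧ b = Sum.inr ⟨e, D.att e i⟩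

/-- Vertices of `R(A)`. -/
def RV (D : GluingData m k) (A : MarkedGraph k) : Type := Quot (D.glueRel A)

instance (D : GluingData m k) (A : MarkedGraph k) : Fintype (D.RV A) :=
  Fintype.ofSurjective (Quot.mk _) (fun b => Quot.inductionOn b fun a => ⟨a, rfl⟩)

/-- The graph recursion `R` determined by the gluing data. -/
def RGraph (D : GluingData m k) (A : MarkedGraph k) : MarkedGraph k where
  G := { V := D.RV A
         fin := inferInstance
         E := (∑ i : Fin m, A.G.E.map (Sym2.map fun v =>
                 (Quot.mk (D.glueRel A) (Sum.inl (i, v)) : D.RV A))) +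
              ∑ e : D.EIdx, (D.Sig e).E.map (Sym2.map fun v =>
                 (Quot.mk (D.glueRel A) (Sum.inr ⟨e, v⟩) : D.RV A)) }
  mark := fun j =>
    (Quot.mk (D.glueRel A) (Sum.inr ⟨D.Phi j, D.root (D.Phi j)⟩) : D.RV A)

/-- `‖Y|_e‖`: the number of copies `i ∈ e` whose marked vertex labeled `ℓ(e)` is
assigned `1` by `Y`. -/
def normY (D : GluingData m k) (e : D.EIdx) (Y : Fin m → Fin k → Bool) : ℕ :=
  ((D.edge e).filter fun i => Y i (D.label e) = true).card

/-- `Z_{Σ_e}(λ, Y|_e, x|_e)`: the conditioned independence polynomial of the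
connecting graph `Σ_e`, given boundary conditions `Y` on the attached copies and
`x` at the root. -/
def ZE (D : GluingData m k) (R : Type) [CommRing R] (lam : R) (e : D.EIdx)
    (Y : Fin m → Fin k → Bool) (x : Fin k → Bool) : R :=
  ∑ σ : (D.Sig e).V → Bool,
    if (D.Sig e).Indep σ ∧ (∀ i ∈ D.edge e, σ (D.att e i) = Y i (D.label e)) ∧
        (∀ j, D.Phi j = e → σ (D.root e) = x j)
      then lam ^ (D.Sig e).ones σ else 0

/-- `Z_{Σ_e}(λ, Y_e, x|_e)` where `Y_e` is an assignment to the vertices of the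
single edge `e`. -/
def ZEdge (D : GluingData m k) (R : Type) [CommRing R] (lam : R) (e : D.EIdx)
    (Ye : {i // i ∈ D.edge e} → Bool) (x : Fin k → Bool) : R :=
  ∑ σ : (D.Sig e).V → Bool,
    if (D.Sig e).Indep σ ∧ (∀ i : {i // i ∈ D.edge e}, σ (D.att e i.1) = Ye i) ∧
        (∀ j, D.Phi j = e → σ (D.root e) = x j)
      then lam ^ (D.Sig e).ones σ else 0

/-- `‖Y_e‖`: the number of `1`-entries of an assignment to the vertices of `e`. -/
def normYe (D : GluingData m k) (e : D.EIdx) (Ye : {i // i ∈ D.edge e} → Bool) : ℕ :=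
  (Finset.univ.filter fun i => Ye i = true).card

/-- The label dynamics `Λ(j) = ℓ(Φ(j))`. -/
def Lam (D : GluingData m k) : Fin k → Fin k := fun j => D.label (D.Phi j)

/-- A label is periodic if it is periodic for `Λ`. -/
def PeriodicLabel (D : GluingData m k) (j : Fin k) : Prop :=
  ∃ p, 1 ≤ p ∧ D.Lam^[p] j = j

/-- A label is critical if `#Φ(j) ≥ 2`. -/
def CriticalLabel (D : GluingData m k) (j : Fin k) : Prop :=
  2 ≤ (D.edge (D.Phi j)).card

/-- Non-degenerate: no periodic critical labels. -/
def NonDegenerate (D : GluingData m k) : Prop :=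
  ∀ j, D.PeriodicLabel j → ¬D.CriticalLabel j

/-- Stable: non-degenerate and the connecting graph `Σ_{Φ(j)}` is a singleton for
every periodic label `j`. -/
def Stable (D : GluingData m k) : Prop :=
  D.NonDegenerate ∧ ∀ j, D.PeriodicLabel j → (D.Sig (D.Phi j)).IsSingleton

/-- The edge `Φ_n(j)` of the gluing scheme `H_n` of the `n`-th iterate of the graph
recursion, as a set of copies indexed by words of length `n`:
`Φ_n(j) = Φ(j) × Φ_{n−1}(Λ(j))`. -/
def PhiSet (D : GluingData m k) (n : ℕ) (j : Fin k) : Finset (Fin n → Fin m) :=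
  Finset.univ.filter fun w => ∀ t : Fin n, w t ∈ D.edge (D.Phi (D.Lam^[(t : ℕ)] j))

/-- Expanding: for some iterate `n ≥ 1` of the recursion, the edges `Φ_n(j)` are
pairwise disjoint subsets of `V(H_n)`. -/
def Expanding (D : GluingData m k) : Prop :=
  ∃ n, 1 ≤ n ∧ ∀ j ℓ : Fin k, j ≠ ℓ → Disjoint (D.PhiSet n j) (D.PhiSet n ℓ)

end GluingData

/-- The singleton graph `K_1`. -/
def K1 : MGraph := { V := PUnit, fin := inferInstance, E := 0 }

lemma K1_connected : K1.Connected := by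
  intro v w
  cases v; cases w
  exact Relation.ReflTransGen.refl

namespace GluingData

variable {m k : ℕ}

/-- The simplified gluing data: every connecting graph replaced by a singleton. -/
def simplified (D : GluingData m k) : GluingData m k :=
  { D with
    Sig := fun _ => K1
    Sig_nonempty := fun _ => ⟨PUnit.unit⟩
    Sig_connected := fun _ => K1_connected
    root := fun _ => PUnit.unit
    att := fun _ _ => PUnit.unit }

/-- The homogeneous polynomial map `F : ℂ^{2^k} → ℂ^{2^k}` induced by the recursion
(for a fixed parameter `lam`). -/
def Fmap (D : GluingData m k) (lam : ℂ) (z : (Fin k → Bool) → ℂ) :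
    (Fin k → Bool) → ℂ := fun x =>
  ∑ Y : Fin m → Fin k → Bool,
    (∏ i, z (Y i)) * ∏ e : D.EIdx, D.ZE ℂ lam e Y x / lam ^ D.normY e Y

end GluingData

/-- Index type for the affine chart `{(0,…,0)-coordinate ≠ 0}` of `ℙ^{2^k−1}`. -/
abbrev NZ (k : ℕ) := {x : Fin k → Bool // x ≠ zeroT k}

/-- The affine chart `ℂ^{2^k−1}` of `ℙ^{2^k−1}`. -/
abbrev CS (k : ℕ) := NZ k → ℂ

/-- `e_j` as a chart index. -/
def unitNZ {k : ℕ} (j : Fin k) : NZ k :=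
  ⟨unitT j, fun h => by
    have := congrFun h j
    simp [unitT, zeroT] at this⟩

/-- Extension of a chart point to a vector of homogeneous coordinates with
`(0,…,0)`-coordinate `1`. -/
def extendC {k : ℕ} (u : CS k) : (Fin k → Bool) → ℂ :=
  fun x => if h : x = zeroT k then 1 else u ⟨x, h⟩

/-- The invariant manifold `M_e` in the chart: `[x] = ∏_{j : x_j = 1} [e_j]`. -/
def MeC (k : ℕ) : Set (CS k) :=
  {u | ∀ x : NZ k, u x = ∏ j ∈ Finset.univ.filter (fun j => x.1 j = true), u (unitNZ j)}

/-- The rational map `F̂` on `ℙ^{2^k−1}` induced by `F`, written in the chart. -/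
def GluingData.Fc {m k : ℕ} (D : GluingData m k) (lam : ℂ) (u : CS k) : CS k := fun x =>
  D.Fmap lam (extendC u) x.1 / D.Fmap lam (extendC u) (zeroT k)

/-- An independent set in a simple graph. -/
def SimpleGraph.IsIndepSet' {V : Type} (G : SimpleGraph V) (s : Set V) : Prop :=
  s.Pairwise fun a b => ¬G.Adj a b

/-- The independence polynomial of a finite simple graph. -/
def indepPoly {V : Type} [Fintype V] [DecidableEq V] (G : SimpleGraph V) : Polynomial ℂ :=
  ∑ I : Finset V, if G.IsIndepSet' (↑I : Set V) then Polynomial.X ^ I.card else 0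

namespace S6

open Asymptotics Topology

variable {m k : ℕ}

/-- The weight contributed by one edge. -/
def we (D : GluingData m k) (lam : ℂ) (e : D.EIdx) (Y : Fin m → Fin k → Bool)
    (x : Fin k → Bool) : ℂ := D.ZE ℂ lam e Y x / lam ^ D.normY e Y

lemma we_congr (D : GluingData m k) (lam : ℂ) (e : D.EIdx) {Y Y' : Fin m → Fin k → Bool}
    {x x' : Fin k → Bool} (h : ∀ i ∈ D.edge e, Y i (D.label e) = Y' i (D.label e))
    (hx : ∀ j, D.Phi j = e → x j = x' j) : we D lam e Y x = we D lam e Y' x' := by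
  have h1 : D.normY e Y = D.normY e Y' := by
    unfold GluingData.normY
    congr 1
    apply Finset.filter_congr
    intro i hi
    rw [h i hi]
  have h2 : D.ZE ℂ lam e Y x = D.ZE ℂ lam e Y' x' := by
    unfold GluingData.ZE
    apply Finset.sum_congr rfl
    intro σ _
    have : ((D.Sig e).Indep σ ∧ (∀ i ∈ D.edge e, σ (D.att e i) = Y i (D.label e)) ∧
        (∀ j, D.Phi j = e → σ (D.root e) = x j)) ↔
        ((D.Sig e).Indep σ ∧ (∀ i ∈ D.edge e, σ (D.att e i) = Y' i (D.label e)) ∧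
        (∀ j, D.Phi j = e → σ (D.root e) = x' j)) := by
      refine and_congr Iff.rfl (and_congr ?_ ?_)
      · exact forall_congr' fun i => forall_congr' fun hi => by rw [h i hi]
      · exact forall_congr' fun i => forall_congr' fun hi => by rw [hx i hi]
    simp only [this]
  unfold we
  rw [h1, h2]

/-- Total edge weight. -/
def W (D : GluingData m k) (lam : ℂ) (Y : Fin m → Fin k → Bool) (x : Fin k → Bool) : ℂ :=
  ∏ e, we D lam e Y x

/-- Multilinear version of the recursion. -/
def L (D : GluingData m k) (lam : ℂ) (q : Fin m → (Fin k → Bool) → ℂ) (x : Fin k → Bool) : ℂ :=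
  ∑ Y : Fin m → Fin k → Bool, (∏ i, q i (Y i)) * W D lam Y x

/-- Product weights. -/
def pp (t : Fin k → ℂ) (y : Fin k → Bool) : ℂ := ∏ j, if y j = true then t j else 1

/-- Exchange of the values on one edge. -/
def sw (D : GluingData m k) (e : D.EIdx) (Y Y' : Fin m → Fin k → Bool) :
    Fin m → Fin k → Bool :=
  fun i l => if i ∈ D.edge e ∧ l = D.label e then Y' i l else Y i l

/-- Exchange of coordinates. -/
def sx (J : Finset (Fin k)) (x x' : Fin k → Bool) : Fin k → Bool :=
  fun j => if j ∈ J then x' j else x j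

lemma sw_invol (D : GluingData m k) (e : D.EIdx) : Function.Involutive
    (fun P : (Fin m → Fin k → Bool) × (Fin m → Fin k → Bool) =>
      (sw D e P.1 P.2, sw D e P.2 P.1)) := by
  rintro ⟨Y, Y'⟩
  simp only [Prod.mk.injEq]
  constructor <;> funext i l <;> unfold sw <;> split_ifs <;> rfl

lemma swap_one (D : GluingData m k) (lam : ℂ) (t : Fin k → ℂ)
    (q : Fin m → (Fin k → Bool) → ℂ) (j : Fin k)
    (hq : ∀ i ∈ D.edge (D.Phi j), q i = pp t) (x x' : Fin k → Bool) :
    L D lam q x * L D lam (fun _ => pp t) x' =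
      L D lam q (sx {j} x x') * L D lam (fun _ => pp t) (sx {j} x' x) := by
  unfold L
  rw [Finset.sum_mul_sum, Finset.sum_mul_sum, ← Finset.sum_product', ← Finset.sum_product',
    Finset.univ_product_univ]
  rw [← Equiv.sum_comp (sw_invol D (D.Phi j)).toPerm]
  apply Finset.sum_congr rfl
  rintro ⟨Y, Y'⟩ _
  simp only [Function.Involutive.coe_toPerm]
  set e := D.Phi j with he
  have h1 : (∏ i, q i (sw D e Y Y' i)) * (∏ i, pp t (sw D e Y' Y i)) =
      (∏ i, q i (Y i)) * (∏ i, pp t (Y' i)) := by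
    rw [← Finset.prod_mul_distrib, ← Finset.prod_mul_distrib]
    apply Finset.prod_congr rfl
    intro i _
    by_cases hi : i ∈ D.edge e
    · rw [hq i hi]
      unfold pp
      rw [← Finset.prod_mul_distrib, ← Finset.prod_mul_distrib]
      apply Finset.prod_congr rfl
      intro l _
      by_cases hl : l = D.label e
      · simp only [sw, hi, hl, and_self, if_true]
        ring
      · simp only [sw, hl, and_false, if_false]
    · have a1 : sw D e Y Y' i = Y i := by funext l; simp [sw, hi]
      have a2 : sw D e Y' Y i = Y' i := by funext l; simp [sw, hi]
      rw [a1, a2]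
  have h2 : W D lam (sw D e Y Y') x * W D lam (sw D e Y' Y) x' =
      W D lam Y (sx {j} x x') * W D lam Y' (sx {j} x' x) := by
    unfold W
    rw [← Finset.prod_mul_distrib, ← Finset.prod_mul_distrib]
    apply Finset.prod_congr rfl
    intro f _
    by_cases hf : f = e
    · rw [hf]
      have key : ∀ (A B : Fin m → Fin k → Bool) (u v : Fin k → Bool),
          we D lam e (sw D e A B) u = we D lam e B (sx {j} v u) := by
        intro A B u v
        apply we_congr
        · intro i hi
          simp [sw, hi]
        · intro j' hj'
          have : j' = j := D.Phi_inj (hj'.trans he)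
          simp [sx, this]
      rw [key Y Y' x x', key Y' Y x' x, mul_comm]
    · have key : ∀ (A B : Fin m → Fin k → Bool) (u v : Fin k → Bool),
          we D lam f (sw D e A B) u = we D lam f A (sx {j} u v) := by
        intro A B u v
        apply we_congr
        · intro i hi
          by_cases hc : i ∈ D.edge e ∧ D.label f = D.label e
          · exact absurd ((D.mem_unique (D.label e) i).unique ⟨hc.2, hi⟩ ⟨rfl, hc.1⟩) hf
          · simp only [sw, hc, if_false]
        · intro j' hj'
          have : j' ≠ j := by
            rintro rfl
            exact hf hj'.symm
          simp [sx, this]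
      rw [key Y Y' x x', key Y' Y x' x]
  calc _ = ((∏ i, q i (sw D e Y Y' i)) * (∏ i, pp t (sw D e Y' Y i))) *
        (W D lam (sw D e Y Y') x * W D lam (sw D e Y' Y) x') := by ring
    _ = _ := by rw [h1, h2]; ring

lemma swap_many (D : GluingData m k) (lam : ℂ) (t : Fin k → ℂ)
    (q : Fin m → (Fin k → Bool) → ℂ) (J : Finset (Fin k)) :
    (∀ j ∈ J, ∀ i ∈ D.edge (D.Phi j), q i = pp t) → ∀ (x x' : Fin k → Bool),
    L D lam q x * L D lam (fun _ => pp t) x' =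
      L D lam q (sx J x x') * L D lam (fun _ => pp t) (sx J x' x) := by
  induction J using Finset.induction_on with
  | empty => 
    intro _ x x'
    have : ∀ u v : Fin k → Bool, sx ∅ u v = u := by
      intro u v; funext l; simp [sx]
    rw [this, this]
  | insert j J hj ih =>
    intro hq x x'
    rw [ih (fun j' h => hq j' (Finset.mem_insert_of_mem h)),
      swap_one D lam t q j (hq j (Finset.mem_insert_self _ _))]
    have : ∀ u v : Fin k → Bool, sx {j} (sx J u v) (sx J v u) = sx (insert j J) u v := by
      intro u v
      funext l
      by_cases hl : l = j
      · subst hl; simp [sx, hj]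
      · simp [sx, hl]
    rw [this, this]

lemma prod_expand {α ι : Type*} [DecidableEq ι] {f : Filter α} {N : α → ℝ} (hN : N =O[f] (fun _ => (1 : ℝ)))
    (a d : ι → α → ℂ) (ha : ∀ i, a i =O[f] (fun _ => (1 : ℝ))) (hd : ∀ i, d i =O[f] N)
    (s : Finset ι) :
    (fun ξ => ∏ i ∈ s, (a i ξ + d i ξ) - ∏ i ∈ s, a i ξ
      - ∑ i ∈ s, ∏ i' ∈ s, (if i' = i then d i' ξ else a i' ξ)) =O[f] (fun ξ => N ξ ^ 2) ∧
    (fun ξ => ∏ i ∈ s, a i ξ) =O[f] (fun _ => (1 : ℝ)) ∧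
    (fun ξ => ∑ i ∈ s, ∏ i' ∈ s, (if i' = i then d i' ξ else a i' ξ)) =O[f] N := by
  induction s using Finset.induction_on with
  | empty =>
    simp only [Finset.prod_empty, Finset.sum_empty, sub_self]
    exact ⟨isBigO_zero _ _, isBigO_const_const _ one_ne_zero _, isBigO_zero _ _⟩
  | insert b s hb ih =>
    obtain ⟨h1, h2, h3⟩ := ih
    have key : ∀ ξ, (∑ i ∈ insert b s, ∏ i' ∈ insert b s, (if i' = i then d i' ξ else a i' ξ)) =
        d b ξ * (∏ i ∈ s, a i ξ) +
        a b ξ * ∑ i ∈ s, ∏ i' ∈ s, (if i' = i then d i' ξ else a i' ξ) := by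
      intro ξ
      rw [Finset.sum_insert hb, Finset.prod_insert hb, if_pos rfl, Finset.mul_sum]
      congr 1
      · congr 1
        apply Finset.prod_congr rfl
        intro i hi
        rw [if_neg]
        rintro rfl
        exact hb hi
      · apply Finset.sum_congr rfl
        intro i hi
        rw [Finset.prod_insert hb, if_neg]
        rintro rfl
        exact hb hi
    have hS : (fun ξ => d b ξ * (∏ i ∈ s, a i ξ) +
        a b ξ * ∑ i ∈ s, ∏ i' ∈ s, (if i' = i then d i' ξ else a i' ξ)) =O[f] N := by
      refine IsBigO.add ?_ ?_
      · simpa using (hd b).mul h2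
      · simpa using (ha b).mul h3
    refine ⟨?_, ?_, ?_⟩
    · simp only [key]
      simp only [Finset.prod_insert hb]
      have e1 : (fun ξ => a b ξ * (∏ i ∈ s, (a i ξ + d i ξ) - ∏ i ∈ s, a i ξ
          - ∑ i ∈ s, ∏ i' ∈ s, (if i' = i then d i' ξ else a i' ξ))) =O[f]
          (fun ξ => N ξ ^ 2) := by
        simpa using (ha b).mul h1
      have e2 : (fun ξ => d b ξ * (∏ i ∈ s, (a i ξ + d i ξ) - ∏ i ∈ s, a i ξ
          - ∑ i ∈ s, ∏ i' ∈ s, (if i' = i then d i' ξ else a i' ξ))) =O[f]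
          (fun ξ => N ξ ^ 2) := by
        simpa using ((hd b).trans hN).mul h1
      have e3 : (fun ξ => d b ξ * ∑ i ∈ s, ∏ i' ∈ s, (if i' = i then d i' ξ else a i' ξ)) =O[f]
          (fun ξ => N ξ ^ 2) := by
        simpa [pow_two] using (hd b).mul h3
      refine ((e1.add e2).add e3).congr_left ?_
      intro ξ
      ring
    · simp only [Finset.prod_insert hb]
      simpa using (ha b).mul h2
    · simpa only [key] using hS

/-- The defect of the defining equations. -/
def defect (ξ : CS k) : CS k := fun x =>
  ξ x - ∏ j ∈ Finset.univ.filter (fun j => x.1 j = true), ξ (unitNZ j)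

lemma pp_eq (ξ : CS k) (y : Fin k → Bool) :
    pp (fun j => ξ (unitNZ j)) y =
      ∏ j ∈ Finset.univ.filter (fun j => y j = true), ξ (unitNZ j) := by
  unfold pp
  rw [Finset.prod_filter]

/-- Error term per tuple. -/
def dl (ξ : CS k) (y : Fin k → Bool) : ℂ := extendC ξ y - pp (fun j => ξ (unitNZ j)) y

lemma dl_le (ξ : CS k) (y : Fin k → Bool) : ‖dl ξ y‖ ≤ ‖defect ξ‖ := by
  by_cases h : y = zeroT k
  · subst h
    have : dl ξ (zeroT k) = 0 := by simp [dl, extendC, pp, zeroT]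
    rw [this, norm_zero]
    exact norm_nonneg _
  · have : dl ξ y = defect ξ ⟨y, h⟩ := by
      simp only [dl, pp_eq, defect, extendC, dif_neg h]
    rw [this]
    exact norm_le_pi_norm (defect ξ) _

lemma bdd_of_cont {ζ : CS k} {g : CS k → ℂ} (hg : ContinuousAt g ζ) :
    g =O[𝓝 ζ] (fun _ => (1 : ℝ)) := hg.tendsto.isBigO_one ℝ

lemma cont_defect : Continuous (defect : CS k → CS k) := by
  unfold defect
  fun_prop

lemma cont_extend (y : Fin k → Bool) : Continuous (fun ξ : CS k => extendC ξ y) := by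
  unfold extendC
  by_cases h : y = zeroT k
  · simp only [h, dif_pos]; exact continuous_const
  · simp only [h, dif_neg, not_false_eq_true]; fun_prop

lemma cont_pp (y : Fin k → Bool) :
    Continuous (fun ξ : CS k => pp (fun j => ξ (unitNZ j)) y) := by
  simp only [pp_eq]
  fun_prop

/-- The product part. -/
def P0 (ξ : CS k) : (Fin k → Bool) → ℂ := pp (fun j => ξ (unitNZ j))

/-- Zeroth order term. -/
def LA (D : GluingData m k) (lam : ℂ) (ξ : CS k) (x : Fin k → Bool) : ℂ :=
  L D lam (fun _ => P0 ξ) x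

/-- First order term for copy `i`. -/
def LB (D : GluingData m k) (lam : ℂ) (ξ : CS k) (i : Fin m) (x : Fin k → Bool) : ℂ :=
  L D lam (fun i' => if i' = i then dl ξ else P0 ξ) x

lemma Fmap_eq (D : GluingData m k) (lam : ℂ) (z : (Fin k → Bool) → ℂ) (x : Fin k → Bool) :
    D.Fmap lam z x = L D lam (fun _ => z) x := rfl

lemma cont_F (D : GluingData m k) (lam : ℂ) (x : Fin k → Bool) :
    Continuous (fun ξ : CS k => D.Fmap lam (extendC ξ) x) := by
  unfold GluingData.Fmap
  refine continuous_finsetSum _ fun Y _ => Continuous.mul ?_ continuous_const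
  exact continuous_finsetProd _ fun i _ => cont_extend _

lemma expansion (D : GluingData m k) (lam : ℂ) (ζ : CS k) (x : Fin k → Bool) :
    (fun ξ => D.Fmap lam (extendC ξ) x - LA D lam ξ x - ∑ i, LB D lam ξ i x) =O[𝓝 ζ]
      (fun ξ => ‖defect ξ‖ ^ 2) ∧
    (fun ξ => LA D lam ξ x) =O[𝓝 ζ] (fun _ => (1 : ℝ)) ∧
    (fun ξ => ∑ i, LB D lam ξ i x) =O[𝓝 ζ] (fun ξ => ‖defect ξ‖) := by
  have hN : (fun ξ : CS k => ‖defect ξ‖) =O[𝓝 ζ] (fun _ => (1 : ℝ)) :=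
    (cont_defect.norm.continuousAt (x := ζ)).tendsto.isBigO_one ℝ
  have H := fun Y : Fin m → Fin k → Bool =>
    prod_expand (f := 𝓝 ζ) hN (fun i ξ => P0 ξ (Y i)) (fun i ξ => dl ξ (Y i))
      (fun i => bdd_of_cont (cont_pp (Y i)).continuousAt)
      (fun i => IsBigO.of_bound 1 (Eventually.of_forall fun ξ => by
        simpa using dl_le ξ (Y i))) Finset.univ
  have hB : ∀ ξ, ∑ i, LB D lam ξ i x = ∑ Y : Fin m → Fin k → Bool,
      W D lam Y x * ∑ i, ∏ i', (if i' = i then dl ξ (Y i') else P0 ξ (Y i')) := by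
    intro ξ
    unfold LB L
    rw [Finset.sum_comm]
    apply Finset.sum_congr rfl
    intro Y _
    rw [Finset.mul_sum]
    apply Finset.sum_congr rfl
    intro i _
    rw [mul_comm]
    congr 1
    apply Finset.prod_congr rfl
    intro i' _
    by_cases hh : i' = i <;> simp [hh]
  have hA : ∀ ξ, LA D lam ξ x = ∑ Y : Fin m → Fin k → Bool,
      W D lam Y x * ∏ i, P0 ξ (Y i) := by
    intro ξ
    unfold LA L
    exact Finset.sum_congr rfl fun Y _ => mul_comm _ _
  have hF : ∀ ξ : CS k, D.Fmap lam (extendC ξ) x = ∑ Y : Fin m → Fin k → Bool,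
      W D lam Y x * ∏ i, (P0 ξ (Y i) + dl ξ (Y i)) := by
    intro ξ
    rw [Fmap_eq]
    unfold L
    refine Finset.sum_congr rfl fun Y _ => ?_
    rw [mul_comm]
    congr 1
    refine Finset.prod_congr rfl fun i _ => ?_
    simp [P0, dl]
  refine ⟨?_, ?_, ?_⟩
  · simp only [hF, hA, hB, ← Finset.sum_sub_distrib, ← mul_sub]
    exact IsBigO.fun_sum fun Y _ => (H Y).1.const_mul_left _
  · simp only [hA]
    exact IsBigO.fun_sum fun Y _ => (H Y).2.1.const_mul_left _
  · simp only [hB]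
    exact IsBigO.fun_sum fun Y _ => (H Y).2.2.const_mul_left _

lemma quad (D : GluingData m k)
    (hdisj : ∀ j ℓ : Fin k, j ≠ ℓ → Disjoint (D.edge (D.Phi j)) (D.edge (D.Phi ℓ)))
    (lam : ℂ) (ζ : CS k) (j : Fin k) (x x' : Fin k → Bool) (hx : x j = false)
    (hx' : x' = fun l => if l = j then true else x l) :
    (fun ξ : CS k => D.Fmap lam (extendC ξ) x' * D.Fmap lam (extendC ξ) (zeroT k) -
      D.Fmap lam (extendC ξ) x * D.Fmap lam (extendC ξ) (unitT j)) =O[𝓝 ζ]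
      (fun ξ => ‖defect ξ‖ ^ 2) := by
  have s1 : sx {j} x' (zeroT k) = x := by
    funext l; by_cases h : l = j
    · subst h; simp [sx, zeroT, hx]
    · simp [sx, hx', h]
  have s2 : sx {j} (zeroT k) x' = unitT j := by
    funext l; by_cases h : l = j
    · subst h; simp [sx, hx', unitT]
    · simp [sx, h, unitT, zeroT]
  have s3 : sx (Finset.univ.erase j) x' (zeroT k) = unitT j := by
    funext l; by_cases h : l = j
    · subst h; simp [sx, hx', unitT]
    · simp [sx, h, unitT, zeroT]
  have s4 : sx (Finset.univ.erase j) (zeroT k) x' = x := by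
    funext l; by_cases h : l = j
    · subst h; simp [sx, zeroT, hx]
    · simp [sx, hx', h]
  have hAA : ∀ ξ, LA D lam ξ x' * LA D lam ξ (zeroT k) =
      LA D lam ξ x * LA D lam ξ (unitT j) := by
    intro ξ
    have := swap_many D lam (fun j => ξ (unitNZ j)) (fun _ => P0 ξ) {j}
      (fun _ _ _ _ => rfl) x' (zeroT k)
    rw [s1, s2] at this
    exact this
  have hAB : ∀ ξ i, LB D lam ξ i x' * LA D lam ξ (zeroT k) +
      LB D lam ξ i (zeroT k) * LA D lam ξ x' =
      LB D lam ξ i x * LA D lam ξ (unitT j) + LB D lam ξ i (unitT j) * LA D lam ξ x := by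
    intro ξ i
    by_cases hi : i ∈ D.edge (D.Phi j)
    · have sm := swap_many D lam (fun j => ξ (unitNZ j))
        (fun i' => if i' = i then dl ξ else P0 ξ) (Finset.univ.erase j) (by
          intro j' hj' i' hi'
          have hne : i' ≠ i := by
            rintro rfl
            exact Finset.disjoint_left.mp (hdisj j j' (Finset.ne_of_mem_erase hj').symm) hi hi'
          simp only [hne, if_false]
          rfl)
      have a := sm x' (zeroT k)
      have b := sm (zeroT k) x'
      rw [s3, s4] at a
      rw [s3, s4] at b
      have a' : LB D lam ξ i x' * LA D lam ξ (zeroT k) =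
        LB D lam ξ i (unitT j) * LA D lam ξ x := a
      have b' : LB D lam ξ i (zeroT k) * LA D lam ξ x' =
        LB D lam ξ i x * LA D lam ξ (unitT j) := b
      rw [a', b']; ring
    · have sm := swap_many D lam (fun j => ξ (unitNZ j))
        (fun i' => if i' = i then dl ξ else P0 ξ) {j} (by
          intro j' hj' i' hi'
          rw [Finset.mem_singleton] at hj'
          subst hj'
          have hne : i' ≠ i := by
            rintro rfl
            exact hi hi'
          simp only [hne, if_false]
          rfl)
      have a := sm x' (zeroT k)
      have b := sm (zeroT k) x'
      rw [s1, s2] at a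
      rw [s1, s2] at b
      have a' : LB D lam ξ i x' * LA D lam ξ (zeroT k) =
        LB D lam ξ i x * LA D lam ξ (unitT j) := a
      have b' : LB D lam ξ i (zeroT k) * LA D lam ξ x' =
        LB D lam ξ i (unitT j) * LA D lam ξ x := b
      rw [a', b']
  have hABs : ∀ ξ, (∑ i, LB D lam ξ i x') * LA D lam ξ (zeroT k) +
      (∑ i, LB D lam ξ i (zeroT k)) * LA D lam ξ x' =
      (∑ i, LB D lam ξ i x) * LA D lam ξ (unitT j) +
      (∑ i, LB D lam ξ i (unitT j)) * LA D lam ξ x := by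
    intro ξ
    simp only [Finset.sum_mul, ← Finset.sum_add_distrib]
    exact Finset.sum_congr rfl fun i _ => hAB ξ i
  have gen : ∀ u v : Fin k → Bool,
      (fun ξ : CS k => D.Fmap lam (extendC ξ) u * D.Fmap lam (extendC ξ) v -
        LA D lam ξ u * LA D lam ξ v - ((∑ i, LB D lam ξ i u) * LA D lam ξ v +
        (∑ i, LB D lam ξ i v) * LA D lam ξ u)) =O[𝓝 ζ] (fun ξ => ‖defect ξ‖ ^ 2) := by
    intro u v
    obtain ⟨u1, u2, u3⟩ := expansion D lam ζ u
    obtain ⟨v1, v2, v3⟩ := expansion D lam ζ v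
    have fv := bdd_of_cont (cont_F D lam v).continuousAt (ζ := ζ)
    have e1 := u1.mul fv
    have e2 := u2.mul v1
    have e3 := u3.mul v3
    have hN : (fun ξ : CS k => ‖defect ξ‖) =O[𝓝 ζ] (fun _ => (1 : ℝ)) :=
      (cont_defect.norm.continuousAt (x := ζ)).tendsto.isBigO_one ℝ
    have e4 := (u3.trans hN).mul v1
    simp only [mul_one, one_mul] at e1 e2 e4
    simp only [← pow_two] at e3
    refine (((e1.add e2).add e3).add e4).congr_left ?_
    intro ξ
    ring
  refine ((gen x' (zeroT k)).sub (gen x (unitT j))).congr_left ?_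
  intro ξ
  linear_combination (-1 : ℂ) * hAA ξ - hABs ξ

/-- Extended ratio coordinate of the image. -/
def G (D : GluingData m k) (lam : ℂ) (ξ : CS k) (x : Fin k → Bool) : ℂ :=
  D.Fmap lam (extendC ξ) x / D.Fmap lam (extendC ξ) (zeroT k)

lemma final (D : GluingData m k)
    (hdisj : ∀ j ℓ : Fin k, j ≠ ℓ → Disjoint (D.edge (D.Phi j)) (D.edge (D.Phi ℓ)))
    (lam : ℂ) (ζ : CS k) (hdef : D.Fmap lam (extendC ζ) (zeroT k) ≠ 0)
    (s : Finset (Fin k)) :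
    (fun ξ : CS k => G D lam ξ (fun l => if l ∈ s then true else false) -
      ∏ j ∈ s, G D lam ξ (unitT j)) =O[𝓝 ζ] (fun ξ => ‖defect ξ‖ ^ 2) := by
  have hc : ∀ x, ContinuousAt (fun ξ : CS k => G D lam ξ x) ζ := fun x =>
    (cont_F D lam x).continuousAt.div (cont_F D lam _).continuousAt hdef
  have hne : ∀ᶠ ξ in 𝓝 ζ, D.Fmap lam (extendC ξ) (zeroT k) ≠ 0 :=
    (cont_F D lam (zeroT k)).continuousAt.eventually_ne hdef
  have hinv : (fun ξ : CS k => ((D.Fmap lam (extendC ξ) (zeroT k)) ^ 2)⁻¹) =O[𝓝 ζ]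
      (fun _ => (1 : ℝ)) :=
    bdd_of_cont (((cont_F D lam (zeroT k)).continuousAt.pow 2).inv₀ (pow_ne_zero 2 hdef))
  induction s using Finset.induction_on with
  | empty =>
    refine IsBigO.congr' (isBigO_zero _ _) ?_ EventuallyEq.rfl
    filter_upwards [hne] with ξ hξ
    have : (fun l : Fin k => if l ∈ (∅ : Finset (Fin k)) then true else false) = zeroT k := by
      funext l; simp [zeroT]
    rw [this, Finset.prod_empty, G, div_self hξ, sub_self]
  | insert j s hj ih =>
    have q := quad D hdisj lam ζ j (fun l => if l ∈ s then true else false)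
      (fun l => if l ∈ insert j s then true else false) (by simp [hj]) (by
        funext l; by_cases h : l = j <;> simp [h])
    have e1 := hinv.mul q
    have e2 := (bdd_of_cont (hc (unitT j))).mul ih
    simp only [one_mul] at e1 e2
    refine (e1.add e2).congr' ?_ EventuallyEq.rfl
    filter_upwards [hne] with ξ hξ
    rw [Finset.prod_insert hj]
    unfold G
    field_simp
    ring

end S6

-- STATEMENT 6
theorem stmt6 {m k : ℕ} (hm : 2 ≤ m) (hk : 2 ≤ k) (D : GluingData m k)
    (hexp : D.Expanding)
    (hdisj : ∀ j ℓ : Fin k, j ≠ ℓ → Disjoint (D.edge (D.Phi j)) (D.edge (D.Phi ℓ)))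
    (lam : ℂ) (hlam : lam ≠ 0)
    (ζ : CS k) (hζ : ζ ∈ MeC k) (hdef : D.Fmap lam (extendC ζ) (zeroT k) ≠ 0) :
    ∃ (U : Set (CS k)) (C ε₀ : ℝ), IsOpen U ∧ ζ ∈ U ∧ 0 < C ∧ 0 < ε₀ ∧
      ∀ ξ ∈ U, ∀ ε : ℝ, 0 < ε → ε ≤ ε₀ →
        (∀ x : NZ k,
          ‖ξ x - ∏ j ∈ Finset.univ.filter (fun j => x.1 j = true), ξ (unitNZ j)‖ ≤ ε) →
        ∀ x : NZ k,
          ‖(D.Fc lam ξ) x -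
              ∏ j ∈ Finset.univ.filter (fun j => x.1 j = true), (D.Fc lam ξ) (unitNZ j)‖ ≤
            C * ε ^ 2 := by
  have key : ∀ x : NZ k, ∃ c : ℝ, 0 < c ∧ ∀ᶠ ξ in nhds ζ,
      ‖(D.Fc lam ξ) x -
        ∏ j ∈ Finset.univ.filter (fun j => x.1 j = true), (D.Fc lam ξ) (unitNZ j)‖ ≤
        c * ‖S6.defect ξ‖ ^ 2 := by
    intro x
    obtain ⟨c, hc, h⟩ := (S6.final D hdisj lam ζ hdef
      (Finset.univ.filter (fun j => x.1 j = true))).exists_pos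
    refine ⟨c, hc, ?_⟩
    filter_upwards [h.bound] with ξ hξ
    have hx : (fun l => if l ∈ Finset.univ.filter (fun j => x.1 j = true) then true else false)
        = x.1 := by
      funext l; simp
    rw [hx, norm_pow, norm_norm] at hξ
    exact hξ
  choose c hc hev using key
  obtain ⟨U, hU, hUo, hζU⟩ := eventually_nhds_iff.mp (eventually_all.mpr hev)
  refine ⟨U, 1 + ∑ x, c x, 1, hUo, hζU, ?_, one_pos, ?_⟩
  · have : 0 ≤ ∑ x, c x := Finset.sum_nonneg fun x _ => (hc x).le
    linarith
  · intro ξ hξ ε hε _ hd x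
    have h1 : ‖S6.defect ξ‖ ≤ ε := (pi_norm_le_iff_of_nonneg hε.le).mpr hd
    have h2 : c x ≤ 1 + ∑ x, c x := by
      have := Finset.single_le_sum (f := c) (fun x _ => (hc x).le) (Finset.mem_univ x)
      linarith
    calc _ ≤ c x * ‖S6.defect ξ‖ ^ 2 := hU ξ hξ x
      _ ≤ c x * ε ^ 2 := by
        have := (hc x).le
        gcongr
      _ ≤ _ := by gcongr

end
end

section
/- Let (H, Σ, Υ, Φ) be a stable and expanding gluing data with parameters m, k ≥ 2, let R be the associated graph recursion, and let (G_n)_{n≥0} be the sequence of marked graphs defined by G_{n+1} = R(G_n) starting from a maximally independent graph G_0 with k marked vertices. Then the zeros of the independence polynomials Z_{G_n}(λ) are uniformly bounded: there exists C > 0 such that for every n ≥ 0 and every λ ∈ ℂ with Z_{G_n}(λ) = 0, one has |λ| ≤ C. -/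
open scoped Classical
open Finset Filter

noncomputable section

/-! ### Part 1: an abstract zero-freeness criterion -/

/-- Override `σ` by `τ` on the `κ`-fibres over `A`. -/
def ovr {U C : Type} (κ : U → C) (A : Finset C) (τ σ : U → Bool) : U → Bool :=
  fun u => if κ u ∈ A then τ u else σ u

lemma cond_iter {U C : Type} (κ : U → C) (E : ((U → Bool) → ℂ) → ℂ) (K : ℝ)
    (H : ∀ (c : C) (F : (U → Bool) → ℂ) (M : ℝ),
      (∀ τ, ‖E (fun σ => F (ovr κ {c} τ σ))‖ ≤ M) → ‖E F‖ ≤ K * M) (A : Finset C) :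
    ∀ (F : (U → Bool) → ℂ) (M : ℝ),
      (∀ τ, ‖E (fun σ => F (ovr κ A τ σ))‖ ≤ M) → ‖E F‖ ≤ K ^ A.card * M := by
  induction A using Finset.induction_on with
  | empty =>
    intro F M h
    have := h (fun _ => false)
    have e : ∀ σ, ovr κ ∅ (fun _ => false) σ = σ := fun σ => by funext u; simp [ovr]
    simpa [e] using this
  | insert c A hc ih =>
    intro F M h
    rw [Finset.card_insert_of_notMem hc, pow_succ', mul_assoc]
    apply H c
    intro τ
    apply ih
    intro τ'
    have := h (ovr κ {c} τ τ')
    convert this using 5 with σ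
    funext u
    simp only [ovr, Finset.mem_insert, Finset.mem_singleton]
    by_cases h1 : κ u = c <;> by_cases h2 : κ u ∈ A <;> simp [h1, h2]

/-- Weighted sum. -/
def wsum {U : Type} [Fintype U] (W F : (U → Bool) → ℂ) : ℂ := ∑ σ, W σ * F σ

lemma cluster_chain {B : Type} (Z : Finset B → ℂ) (n : ℕ)
    (ih : ∀ S : Finset B, S.card < n → ∀ b ∉ S, ‖Z (insert b S) - Z S‖ ≤ 1 / 2 * ‖Z S‖)
    (R T : Finset B) (hd : Disjoint R T) (hc : (R ∪ T).card ≤ n) :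
    ‖Z (R ∪ T)‖ ≤ (3 / 2) ^ T.card * ‖Z R‖ ∧ ‖Z R‖ ≤ 2 ^ T.card * ‖Z (R ∪ T)‖ := by
  induction T using Finset.induction_on with
  | empty => simp
  | insert t T ht ih' =>
    rw [Finset.disjoint_insert_right] at hd
    have hnot : t ∉ R ∪ T := by simp [ht, hd.1]
    have e : R ∪ insert t T = insert t (R ∪ T) := by
      rw [Finset.union_insert]
    rw [e, Finset.card_insert_of_notMem hnot] at hc
    obtain ⟨h1, h2⟩ := ih' hd.2 (by omega)
    have h3 := ih (R ∪ T) (by omega) t hnot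
    rw [e, Finset.card_insert_of_notMem ht, pow_succ', pow_succ']
    have h4 : ‖Z (insert t (R ∪ T))‖ ≤ 3 / 2 * ‖Z (R ∪ T)‖ := by
      have := norm_le_norm_sub_add (Z (insert t (R ∪ T))) (Z (R ∪ T))
      linarith
    have h5 : ‖Z (R ∪ T)‖ ≤ 2 * ‖Z (insert t (R ∪ T))‖ := by
      have := norm_le_norm_sub_add (Z (R ∪ T)) (Z (insert t (R ∪ T)))
      rw [norm_sub_rev] at this
      linarith
    constructor
    · calc _ ≤ 3 / 2 * ‖Z (R ∪ T)‖ := h4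
        _ ≤ 3 / 2 * ((3 / 2) ^ T.card * ‖Z R‖) := by gcongr
        _ = _ := by ring
    · calc _ ≤ 2 ^ T.card * ‖Z (R ∪ T)‖ := h2
        _ ≤ 2 ^ T.card * (2 * ‖Z (insert t (R ∪ T))‖) := by gcongr
        _ = _ := by ring

lemma cluster {U C B : Type} [Fintype U] [Fintype B] (κ : U → C) (W : (U → Bool) → ℂ)
    (K ε : ℝ) (k Δ : ℕ) (Nb : B → Finset C) (hN : ∀ b, (Nb b).card ≤ k)
    (hΔ : ∀ c, (Finset.univ.filter fun b => c ∈ Nb b).card ≤ Δ)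
    (hK : 1 ≤ K) (hε0 : 0 ≤ ε) (hε : K ^ k * (ε * 3 ^ (k * Δ)) ≤ 1 / 2)
    (H : ∀ (c : C) (F : (U → Bool) → ℂ) (M : ℝ),
      (∀ τ, ‖wsum W (fun σ => F (ovr κ {c} τ σ))‖ ≤ M) → ‖wsum W F‖ ≤ K * M) (n : ℕ) :
    ∀ g : B → (U → Bool) → ℂ, (∀ b σ, ‖g b σ - 1‖ ≤ ε) →
      (∀ b σ σ', (∀ u, κ u ∈ Nb b → σ u = σ' u) → g b σ = g b σ') →
      ∀ S : Finset B, S.card = n → ∀ b ∉ S,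
      ‖wsum W (fun σ => ∏ b' ∈ insert b S, g b' σ) - wsum W (fun σ => ∏ b' ∈ S, g b' σ)‖
        ≤ 1 / 2 * ‖wsum W (fun σ => ∏ b' ∈ S, g b' σ)‖ := by
  induction n using Nat.strong_induction_on with
  | _ n ih =>
  intro g hg hloc S hS b hb
  set T := S.filter fun b' => ¬ Disjoint (Nb b') (Nb b) with hT
  set R := S.filter fun b' => Disjoint (Nb b') (Nb b) with hR
  have hRT : R ∪ T = S := by
    rw [hR, hT, Finset.filter_union_filter_not_eq]
  have hdis : Disjoint R T := Finset.disjoint_filter_filter_not _ _ _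
  have hTc : T.card ≤ k * Δ := by
    have : T ⊆ (Nb b).biUnion fun c => Finset.univ.filter fun b' => c ∈ Nb b' := by
      intro x hx
      rw [hT, Finset.mem_filter, Finset.not_disjoint_iff] at hx
      obtain ⟨_, c, h1, h2⟩ := hx
      simp only [Finset.mem_biUnion, Finset.mem_filter, Finset.mem_univ, true_and]
      exact ⟨c, h2, h1⟩
    calc T.card ≤ _ := Finset.card_le_card this
      _ ≤ (Nb b).card * Δ := Finset.card_biUnion_le_card_mul _ _ _ (fun c _ => hΔ c)
      _ ≤ k * Δ := Nat.mul_le_mul_right _ (hN b)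
  have hdiff : wsum W (fun σ => ∏ b' ∈ insert b S, g b' σ) - wsum W (fun σ => ∏ b' ∈ S, g b' σ)
      = wsum W (fun σ => (g b σ - 1) * ∏ b' ∈ S, g b' σ) := by
    unfold wsum
    rw [← Finset.sum_sub_distrib]
    refine Finset.sum_congr rfl fun σ _ => ?_
    simp only [Finset.prod_insert hb]; ring
  rw [hdiff]
  set N := ‖wsum W (fun σ => ∏ b' ∈ S, g b' σ)‖ with hNdef
  have key := cond_iter κ (wsum W) K H (Nb b)
    (fun σ => (g b σ - 1) * ∏ b' ∈ S, g b' σ) (ε * (3 ^ (k * Δ) * N)) (by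
      intro τ
      set g' : B → (U → Bool) → ℂ := fun b' σ => g b' (ovr κ (Nb b) τ σ) with hg'
      have hconst : ∀ σ, g b (ovr κ (Nb b) τ σ) = g b τ := fun σ =>
        hloc b _ _ (fun u hu => by simp [ovr, hu])
      have e1 : wsum W (fun σ => (g b (ovr κ (Nb b) τ σ) - 1) *
          ∏ b' ∈ S, g b' (ovr κ (Nb b) τ σ)) =
          (g b τ - 1) * wsum W (fun σ => ∏ b' ∈ S, g' b' σ) := by
        unfold wsum
        rw [Finset.mul_sum]
        refine Finset.sum_congr rfl fun σ _ => ?_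
        simp only [hconst, hg']; ring
      rw [e1, norm_mul]
      have hg'1 : ∀ b σ, ‖g' b σ - 1‖ ≤ ε := fun b σ => hg _ _
      have hg'2 : ∀ b σ σ', (∀ u, κ u ∈ Nb b → σ u = σ' u) → g' b σ = g' b σ' := by
        intro b' σ σ' h
        apply hloc
        intro u hu
        simp only [ovr]
        split_ifs
        · rfl
        · exact h u hu
      have c1 := (cluster_chain (fun S => wsum W (fun σ => ∏ b' ∈ S, g' b' σ)) n
        (fun S' hS' b' hb' => ih S'.card hS' g' hg'1 hg'2 S' rfl b' hb') R T hdis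
        (by rw [hRT, hS])).1
      have c2 := (cluster_chain (fun S => wsum W (fun σ => ∏ b' ∈ S, g b' σ)) n
        (fun S' hS' b' hb' => ih S'.card hS' g hg hloc S' rfl b' hb') R T hdis
        (by rw [hRT, hS])).2
      have e2 : wsum W (fun σ => ∏ b' ∈ R, g' b' σ) = wsum W (fun σ => ∏ b' ∈ R, g b' σ) := by
        congr 1
        funext σ
        refine Finset.prod_congr rfl fun b' hb' => ?_
        rw [hR, Finset.mem_filter] at hb'
        apply hloc
        intro u hu
        have : κ u ∉ Nb b := fun h => (Finset.disjoint_left.1 hb'.2) hu h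
        simp [ovr, this]
      rw [hRT] at c1 c2
      rw [e2] at c1
      have c3 : ‖wsum W (fun σ => ∏ b' ∈ S, g' b' σ)‖ ≤ 3 ^ (k * Δ) * N := by
        calc _ ≤ _ := c1
          _ ≤ (3 / 2) ^ T.card * (2 ^ T.card * N) := by gcongr
          _ = 3 ^ T.card * N := by rw [← mul_assoc, ← mul_pow]; norm_num
          _ ≤ _ := by gcongr; norm_num
      gcongr
      exact hg _ _)
  calc _ ≤ _ := key
    _ ≤ K ^ k * (ε * (3 ^ (k * Δ) * N)) := by
      gcongr
      exact hN b
    _ = (K ^ k * (ε * 3 ^ (k * Δ))) * N := by ring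
    _ ≤ 1 / 2 * N := by gcongr

lemma cluster_ne_zero {U C B : Type} [Fintype U] [Fintype B] (κ : U → C) (W : (U → Bool) → ℂ)
    (K ε : ℝ) (k Δ : ℕ) (Nb : B → Finset C) (hN : ∀ b, (Nb b).card ≤ k)
    (hΔ : ∀ c, (Finset.univ.filter fun b => c ∈ Nb b).card ≤ Δ)
    (hK : 1 ≤ K) (hε0 : 0 ≤ ε) (hε : K ^ k * (ε * 3 ^ (k * Δ)) ≤ 1 / 2)
    (H : ∀ (c : C) (F : (U → Bool) → ℂ) (M : ℝ),
      (∀ τ, ‖wsum W (fun σ => F (ovr κ {c} τ σ))‖ ≤ M) → ‖wsum W F‖ ≤ K * M)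
    (hW : ∃ σ, W σ ≠ 0)
    (g : B → (U → Bool) → ℂ) (hg : ∀ b σ, ‖g b σ - 1‖ ≤ ε)
    (hloc : ∀ b σ σ', (∀ u, κ u ∈ Nb b → σ u = σ' u) → g b σ = g b σ') :
    wsum W (fun σ => ∏ b, g b σ) ≠ 0 := by
  have h1 : wsum W (fun _ => 1) ≠ 0 := by
    intro h0
    obtain ⟨σ₀, hσ₀⟩ := hW
    have := cond_iter κ (wsum W) K H (Finset.univ.image κ)
      (fun σ => if σ = σ₀ then 1 else 0) 0 (by
        intro τ
        have : ∀ σ, ovr κ (Finset.univ.image κ) τ σ = τ := fun σ => by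
          funext u; simp [ovr]
        simp only [this]
        have e : wsum W (fun _ => if τ = σ₀ then (1 : ℂ) else 0) =
            wsum W (fun _ => 1) * (if τ = σ₀ then (1 : ℂ) else 0) := by
          simp [wsum]
        rw [e, h0]; simp)
    rw [mul_zero] at this
    have h2 : wsum W (fun σ => if σ = σ₀ then (1 : ℂ) else 0) = W σ₀ := by
      simp [wsum]
    rw [h2] at this
    exact hσ₀ (norm_le_zero_iff.1 this)
  have h2 := (cluster_chain (fun S => wsum W (fun σ => ∏ b' ∈ S, g b' σ)) (Fintype.card B)
    (fun S hS b hb => cluster κ W K ε k Δ Nb hN hΔ hK hε0 hε H _ g hg hloc S rfl b hb)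
    ∅ Finset.univ (Finset.disjoint_empty_left _) (by simp [Finset.card_univ])).2
  intro h0
  simp only [Finset.empty_union, Finset.prod_empty] at h2
  rw [h0] at h2
  simp only [norm_zero, mul_zero] at h2
  exact h1 (norm_le_zero_iff.1 h2)

/-! ### Part 2: hard-core weights on graphs with small components -/

lemma pow_sum_bound {T : Type} [Fintype T] (P : T → Prop) (a : T → ℕ) (lam : ℂ) (M : ℝ)
    (hM : (Fintype.card T : ℝ) ≤ M) (hne : ∃ t, P t) (hlam : 2 * M ≤ ‖lam‖) :
    ∑ t, ‖(if P t then lam ^ a t else 0 : ℂ)‖ ≤ 2 * M * ‖∑ t, (if P t then lam ^ a t else 0 : ℂ)‖ := by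
  obtain ⟨t₀, ht₀, hmax⟩ := Finset.exists_max_image (Finset.univ.filter P) a
    (by obtain ⟨t, ht⟩ := hne; exact ⟨t, by simp [ht]⟩)
  simp only [Finset.mem_filter, Finset.mem_univ, true_and] at ht₀ hmax
  have hM1 : 1 ≤ M := by
    have : 0 < Fintype.card T := Fintype.card_pos_iff.2 ⟨t₀⟩
    have : (1 : ℝ) ≤ Fintype.card T := by exact_mod_cast this
    linarith
  have hl1 : 1 ≤ ‖lam‖ := by linarith
  have hl0 : lam ≠ 0 := by intro h; rw [h, norm_zero] at hl1; linarith
  set d := a t₀ with hd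
  -- top part and rest
  set top : ℂ := ∑ t, (if P t ∧ a t = d then lam ^ a t else 0 : ℂ) with htop
  set low : ℂ := ∑ t, (if P t ∧ a t ≠ d then lam ^ a t else 0 : ℂ) with hlow
  have hsplit : ∑ t, (if P t then lam ^ a t else 0 : ℂ) = top + low := by
    rw [htop, hlow, ← Finset.sum_add_distrib]
    refine Finset.sum_congr rfl fun t _ => ?_
    by_cases h1 : P t <;> by_cases h2 : a t = d <;> simp [h1, h2]
  have htop' : top = ((Finset.univ.filter fun t => P t ∧ a t = d).card : ℂ) * lam ^ d := by
    rw [htop, ← Finset.sum_filter, ← nsmul_eq_mul, ← Finset.sum_const]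
    refine Finset.sum_congr rfl fun t ht => ?_
    simp only [Finset.mem_filter] at ht
    rw [ht.2.2]
  have h1 : ‖lam‖ ^ d ≤ ‖top‖ := by
    rw [htop', norm_mul, norm_pow, Complex.norm_natCast]
    have : 0 < (Finset.univ.filter fun t => P t ∧ a t = d).card :=
      Finset.card_pos.2 ⟨t₀, by simp [ht₀, hd]⟩
    have : (1 : ℝ) ≤ (Finset.univ.filter fun t => P t ∧ a t = d).card := by exact_mod_cast this
    have h0 : 0 ≤ ‖lam‖ ^ d := by positivity
    nlinarith
  have h2 : ‖low‖ * ‖lam‖ ≤ M * ‖lam‖ ^ d := by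
    have : ‖low‖ * ‖lam‖ ≤ ∑ _t : T, ‖lam‖ ^ d := by
      calc _ ≤ (∑ t, ‖(if P t ∧ a t ≠ d then lam ^ a t else 0 : ℂ)‖) * ‖lam‖ := by
            gcongr; exact norm_sum_le _ _
        _ = ∑ t, ‖(if P t ∧ a t ≠ d then lam ^ a t else 0 : ℂ)‖ * ‖lam‖ := Finset.sum_mul _ _ _
        _ ≤ _ := by
          refine Finset.sum_le_sum fun t _ => ?_
          split_ifs with h
          · rw [norm_pow, ← pow_succ]
            apply pow_le_pow_right₀ hl1
            have := hmax t h.1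
            have := h.2
            omega
          · simp only [norm_zero, zero_mul]; positivity
    refine this.trans ?_
    rw [Finset.sum_const, nsmul_eq_mul, Finset.card_univ]
    gcongr
  have h3 : ‖low‖ ≤ 1 / 2 * ‖lam‖ ^ d := by
    have h0 : 0 ≤ ‖low‖ := norm_nonneg _
    have : ‖low‖ * (2 * M) ≤ M * ‖lam‖ ^ d := le_trans (by gcongr) h2
    have : M * (2 * ‖low‖) ≤ M * ‖lam‖ ^ d := by linarith
    have := le_of_mul_le_mul_left this (by linarith)
    linarith
  have h4 : 1 / 2 * ‖lam‖ ^ d ≤ ‖top + low‖ := by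
    have := norm_sub_le_norm_add top low
    linarith
  rw [hsplit]
  calc _ ≤ ∑ _t : T, ‖lam‖ ^ d := by
        refine Finset.sum_le_sum fun t _ => ?_
        split_ifs with h
        · rw [norm_pow]
          exact pow_le_pow_right₀ hl1 (hmax t h)
        · simp only [norm_zero]; positivity
    _ = Fintype.card T * ‖lam‖ ^ d := by rw [Finset.sum_const, nsmul_eq_mul, Finset.card_univ]
    _ ≤ M * ‖lam‖ ^ d := by gcongr
    _ = 2 * M * (1 / 2 * ‖lam‖ ^ d) := by ring
    _ ≤ _ := by gcongr

/-- The hard-core weight. -/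
def hcW (lam : ℂ) (G : MGraph) (σ : G.V → Bool) : ℂ := if G.Indep σ then lam ^ G.ones σ else 0

lemma hcW_split (lam : ℂ) (G : MGraph) {C : Type} (κ : G.V → C)
    (hκ : ∀ v w, s(v, w) ∈ G.E → κ v = κ w) (c : C) (τ σ : G.V → Bool) :
    hcW lam G (ovr κ {c} τ σ) = hcW lam G (ovr κ {c} τ fun _ => false) *
      hcW lam G (ovr κ {c} (fun _ => false) σ) := by
  have h1 : G.Indep (ovr κ {c} τ σ) ↔ G.Indep (ovr κ {c} τ fun _ => false) ∧
      G.Indep (ovr κ {c} (fun _ => false) σ) := by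
    constructor
    · intro h
      constructor
      · intro v w hvw
        have := h v w hvw
        have e := hκ v w hvw
        simp only [ovr, Finset.mem_singleton, e] at this ⊢
        split_ifs at this ⊢ <;> simp_all
      · intro v w hvw
        have := h v w hvw
        have e := hκ v w hvw
        simp only [ovr, Finset.mem_singleton, e] at this ⊢
        split_ifs at this ⊢ <;> simp_all
    · rintro ⟨ha, hb⟩ v w hvw
      have h1 := ha v w hvw
      have h2 := hb v w hvw
      have e := hκ v w hvw
      simp only [ovr, Finset.mem_singleton, e] at h1 h2 ⊢
      split_ifs at h1 h2 ⊢ <;> simp_all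
  have h2 : G.ones (ovr κ {c} τ σ) = G.ones (ovr κ {c} τ fun _ => false) +
      G.ones (ovr κ {c} (fun _ => false) σ) := by
    simp only [MGraph.ones, Finset.card_filter]
    rw [← Finset.sum_add_distrib]
    refine Finset.sum_congr rfl fun v _ => ?_
    simp only [ovr, Finset.mem_singleton]
    by_cases h : κ v = c <;> simp [h]
  unfold hcW
  by_cases ha : G.Indep (ovr κ {c} τ fun _ => false) <;>
    by_cases hb : G.Indep (ovr κ {c} (fun _ => false) σ) <;>
    simp [h1, ha, hb, h2, pow_add]

lemma indep_false (G : MGraph) : G.Indep fun _ => false := by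
  intro v w _ h
  simp at h

lemma hcW_cond (lam : ℂ) (G : MGraph) {C : Type} (κ : G.V → C)
    (hκ : ∀ v w, s(v, w) ∈ G.E → κ v = κ w) (s : ℕ)
    (hs : ∀ c, (Finset.univ.filter fun v => κ v = c).card ≤ s)
    (hlam : 2 * (2 : ℝ) ^ s ≤ ‖lam‖) (c : C) (F : (G.V → Bool) → ℂ) (M : ℝ)
    (hF : ∀ τ, ‖wsum (hcW lam G) (fun σ => F (ovr κ {c} τ σ))‖ ≤ M) :
    ‖wsum (hcW lam G) F‖ ≤ (2 * 2 ^ s) * M := by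
  let T := {v : G.V // κ v = c} → Bool
  let R := {v : G.V // ¬ κ v = c} → Bool
  let ex : T → G.V → Bool := fun t v => if h : κ v = c then t ⟨v, h⟩ else false
  let ey : R → G.V → Bool := fun t v => if h : ¬ κ v = c then t ⟨v, h⟩ else false
  have hdec : ∀ F : (G.V → Bool) → ℂ, wsum (hcW lam G) F =
      ∑ t : T, ∑ r : R, hcW lam G (ex t) * hcW lam G (ey r) * F (ovr κ {c} (ex t) (ey r)) := by
    intro F
    unfold wsum
    rw [← Fintype.sum_prod_type']
    refine Fintype.sum_equiv (Equiv.piEquivPiSubtypeProd (fun v => κ v = c) (fun _ => Bool)) _ _ ?_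
    intro σ
    have e0 : ovr κ {c} (ex fun x => σ x) (ey fun x => σ x) = σ := by
      funext v
      by_cases h : κ v = c <;> simp [ovr, h, ex, ey]
    have e1 : ovr κ {c} (ex fun x => σ x) (fun _ => false) = ex fun x => σ x := by
      funext v
      by_cases h : κ v = c <;> simp [ovr, h, ex]
    have e2 : ovr κ {c} (fun _ => false) (ey fun x => σ x) = ey fun x => σ x := by
      funext v
      by_cases h : κ v = c <;> simp [ovr, h, ey]
    have := hcW_split lam G κ hκ c (ex fun x => σ x) (ey fun x => σ x)
    rw [e0, e1, e2] at this
    simp only [Equiv.piEquivPiSubtypeProd_apply]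
    rw [e0, this]
  set z : ℂ := ∑ t : T, hcW lam G (ex t) with hz
  set Φ : T → ℂ := fun t => ∑ r : R, hcW lam G (ey r) * F (ovr κ {c} (ex t) (ey r)) with hΦ
  have h1 : wsum (hcW lam G) F = ∑ t, hcW lam G (ex t) * Φ t := by
    rw [hdec F]
    refine Finset.sum_congr rfl fun t _ => ?_
    rw [hΦ, Finset.mul_sum]
    exact Finset.sum_congr rfl fun r _ => by ring
  have h2 : ∀ t, ‖z‖ * ‖Φ t‖ ≤ M := by
    intro t
    have := hF (ex t)
    rw [hdec] at this
    rw [← norm_mul, hz, Finset.sum_mul]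
    convert this using 2
    refine Finset.sum_congr rfl fun t' _ => ?_
    rw [hΦ, Finset.mul_sum]
    refine Finset.sum_congr rfl fun r _ => ?_
    have : ovr κ {c} (ex t) (ovr κ {c} (ex t') (ey r)) = ovr κ {c} (ex t) (ey r) := by
      funext v
      by_cases h : κ v = c <;> simp [ovr, h]
    rw [this]; ring
  have hb := pow_sum_bound (T := T) (fun t => G.Indep (ex t)) (fun t => G.ones (ex t)) lam (2 ^ s)
    (by
      have : Fintype.card T ≤ 2 ^ s := by
        rw [Fintype.card_fun, Fintype.card_bool, Fintype.card_subtype]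
        exact Nat.pow_le_pow_right (by norm_num) (hs c)
      exact_mod_cast this)
    ⟨fun _ => false, by
      have : ex (fun _ => false) = fun _ => false := by
        funext v; simp [ex]
      rw [this]; exact indep_false G⟩ hlam
  change ∑ t, ‖hcW lam G (ex t)‖ ≤ 2 * 2 ^ s * ‖z‖ at hb
  have hM0 : 0 ≤ M := le_trans (by positivity) (h2 fun _ => false)
  rw [h1]
  by_cases hz0 : ‖z‖ = 0
  · rw [hz0, mul_zero] at hb
    have h0 : ∀ t, ‖hcW lam G (ex t)‖ = 0 := by
      intro t
      have : ‖hcW lam G (ex t)‖ ≤ ∑ t, ‖hcW lam G (ex t)‖ := Finset.single_le_sum (f := fun t => ‖hcW lam G (ex t)‖)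
        (fun t _ => norm_nonneg _) (Finset.mem_univ t)
      exact le_antisymm (by linarith) (norm_nonneg _)
    rw [Finset.sum_eq_zero (fun t _ => by rw [norm_eq_zero.1 (h0 t), zero_mul]), norm_zero]
    positivity
  · have hzp : 0 < ‖z‖ := lt_of_le_of_ne (norm_nonneg _) (Ne.symm hz0)
    calc _ ≤ ∑ t, ‖hcW lam G (ex t)‖ * ‖Φ t‖ := by
          refine (norm_sum_le _ _).trans (le_of_eq ?_)
          simp
      _ ≤ ∑ t, ‖hcW lam G (ex t)‖ * (M / ‖z‖) := by
          refine Finset.sum_le_sum fun t _ => ?_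
          gcongr
          rw [le_div_iff₀ hzp]
          linarith [h2 t]
      _ = (∑ t, ‖hcW lam G (ex t)‖) * (M / ‖z‖) := by rw [Finset.sum_mul]
      _ ≤ (2 * 2 ^ s * ‖z‖) * (M / ‖z‖) := by gcongr
      _ = _ := by field_simp

/-! ### Part 3: the recursion for weighted conditioned sums -/

/-- Weighted conditioned sum. -/
def Zw {k : ℕ} (lam : ℂ) (A : MarkedGraph k) (φ : (A.G.V → Bool) → ℂ) (x : Fin k → Bool) : ℂ :=
  ∑ σ : A.G.V → Bool,
    if A.G.Indep σ ∧ (∀ j, σ (A.mark j) = x j) then lam ^ A.G.ones σ * φ σ else 0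

/-- Number of unmarked ones. -/
def ones' {k : ℕ} (A : MarkedGraph k) (σ : A.G.V → Bool) : ℕ :=
  (Finset.univ.filter fun v : {v : A.G.V // ∀ j, A.mark j ≠ v} => σ v.1 = true).card

/-- Weighted conditioned sum with the marked vertices not counted. -/
def Win {k : ℕ} (lam : ℂ) (A : MarkedGraph k) (φ : (A.G.V → Bool) → ℂ) (x : Fin k → Bool) : ℂ :=
  ∑ σ : A.G.V → Bool,
    if A.G.Indep σ ∧ (∀ j, σ (A.mark j) = x j) then lam ^ ones' A σ * φ σ else 0

lemma ones_eq {k : ℕ} (A : MarkedGraph k) (hA : Function.Injective A.mark) (σ : A.G.V → Bool) :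
    A.G.ones σ = wt (fun j => σ (A.mark j)) + ones' A σ := by
  unfold MGraph.ones wt ones'
  simp only [Finset.card_filter]
  rw [← Finset.sum_filter_add_sum_filter_not Finset.univ (fun v => ∃ j, A.mark j = v)]
  congr 1
  · have : (Finset.univ.filter fun v => ∃ j, A.mark j = v) = Finset.univ.image A.mark := by
      ext v; simp
    rw [this, Finset.sum_image (fun a _ b _ h => hA h)]
  · rw [Finset.sum_subtype]
    intro x
    simp

lemma Zw_eq {k : ℕ} (lam : ℂ) (A : MarkedGraph k) (hA : Function.Injective A.mark)
    (φ : (A.G.V → Bool) → ℂ) (x : Fin k → Bool) :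
    Zw lam A φ x = lam ^ wt x * Win lam A φ x := by
  unfold Zw Win
  rw [Finset.mul_sum]
  refine Finset.sum_congr rfl fun σ _ => ?_
  by_cases h : A.G.Indep σ ∧ (∀ j, σ (A.mark j) = x j)
  · rw [if_pos h, if_pos h, ones_eq A hA]
    have : (fun j => σ (A.mark j)) = x := funext h.2
    rw [this, pow_add]; ring
  · rw [if_neg h, if_neg h, mul_zero]

namespace GluingData

variable {m k : ℕ}

/-- The edge labeled `l` containing `i`. -/
def eOf (D : GluingData m k) (l : Fin k) (i : Fin m) : D.EIdx := (D.mem_unique l i).choose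

lemma eOf_label (D : GluingData m k) (l : Fin k) (i : Fin m) : D.label (D.eOf l i) = l :=
  (D.mem_unique l i).choose_spec.1.1

lemma eOf_mem (D : GluingData m k) (l : Fin k) (i : Fin m) : i ∈ D.edge (D.eOf l i) :=
  (D.mem_unique l i).choose_spec.1.2

lemma eOf_eq (D : GluingData m k) (e : D.EIdx) (i : Fin m) (h : i ∈ D.edge e) :
    D.eOf (D.label e) i = e :=
  ((D.mem_unique (D.label e) i).choose_spec.2 e ⟨rfl, h⟩).symm

/-- Vertex of a copy. -/
def vL (D : GluingData m k) (A : MarkedGraph k) (i : Fin m) (v : A.G.V) : D.RV A :=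
  Quot.mk _ (Sum.inl (i, v))

/-- Vertex of a connecting graph. -/
def vR (D : GluingData m k) (A : MarkedGraph k) (e : D.EIdx) (v : (D.Sig e).V) : D.RV A :=
  Quot.mk _ (Sum.inr ⟨e, v⟩)

lemma vL_mark' (D : GluingData m k) (A : MarkedGraph k) (e : D.EIdx) (i : Fin m)
    (h : i ∈ D.edge e) : D.vL A i (A.mark (D.label e)) = D.vR A e (D.att e i) :=
  Quot.sound ⟨e, i, h, rfl, rfl⟩

lemma vL_mark (D : GluingData m k) (A : MarkedGraph k) (l : Fin k) (i : Fin m) :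
    D.vL A i (A.mark l) = D.vR A (D.eOf l i) (D.att (D.eOf l i) i) := by
  have := D.vL_mark' A (D.eOf l i) i (D.eOf_mem l i)
  rwa [D.eOf_label] at this

lemma RV_ind (D : GluingData m k) (A : MarkedGraph k) {P : D.RV A → Prop}
    (hL : ∀ i v, P (D.vL A i v)) (hR : ∀ e v, P (D.vR A e v)) (u : D.RV A) : P u := by
  induction u using Quot.ind with
  | _ a =>
    rcases a with ⟨i, v⟩ | ⟨e, v⟩
    · exact hL i v
    · exact hR e v

/-- Eliminator into a type. -/
def RVlift (D : GluingData m k) (A : MarkedGraph k) {X : Type} (f : Fin m → A.G.V → X)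
    (g : (e : D.EIdx) → (D.Sig e).V → X)
    (h : ∀ e i, i ∈ D.edge e → f i (A.mark (D.label e)) = g e (D.att e i)) : D.RV A → X :=
  Quot.lift (Sum.elim (fun p => f p.1 p.2) (fun p => g p.1 p.2)) (by
    rintro a b ⟨e, i, hi, rfl, rfl⟩
    exact h e i hi)

/-- Normal form of a vertex. -/
def back (D : GluingData m k) (A : MarkedGraph k) (hA : Function.Injective A.mark) :
    D.RV A → (Σ e : D.EIdx, (D.Sig e).V) ⊕ (Fin m × {v : A.G.V // ∀ j, A.mark j ≠ v}) :=
  D.RVlift A (fun i v => if h : ∃ l, A.mark l = v then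
      Sum.inl ⟨D.eOf h.choose i, D.att _ i⟩ else Sum.inr (i, ⟨v, fun j hj => h ⟨j, hj⟩⟩))
    (fun e v => Sum.inl ⟨e, v⟩) (by
      intro e i hi
      have h : ∃ l, A.mark l = A.mark (D.label e) := ⟨_, rfl⟩
      rw [dif_pos h]
      have h1 : h.choose = D.label e := hA h.choose_spec
      rw [h1, D.eOf_eq e i hi])

/-- Vertices of `R(A)` in normal form. -/
def vEquiv (D : GluingData m k) (A : MarkedGraph k) (hA : Function.Injective A.mark) :
    D.RV A ≃ (Σ e : D.EIdx, (D.Sig e).V) ⊕ (Fin m × {v : A.G.V // ∀ j, A.mark j ≠ v}) where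
  toFun := D.back A hA
  invFun := Sum.elim (fun p => D.vR A p.1 p.2) (fun p => D.vL A p.1 p.2.1)
  left_inv := by
    intro u
    refine D.RV_ind A (P := fun u => Sum.elim (fun p : (Σ e : D.EIdx, (D.Sig e).V) =>
      D.vR A p.1 p.2) (fun p => D.vL A p.1 p.2.1) (D.back A hA u) = u) ?_ ?_ u
    · intro i v
      by_cases h : ∃ l, A.mark l = v
      · have e : D.back A hA (D.vL A i v) = Sum.inl ⟨D.eOf h.choose i, D.att _ i⟩ := dif_pos h
        rw [e]
        simp only [Sum.elim_inl]
        rw [← D.vL_mark A, h.choose_spec]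
      · have e : D.back A hA (D.vL A i v) = Sum.inr (i, ⟨v, fun j hj => h ⟨j, hj⟩⟩) := dif_neg h
        rw [e]
        rfl
    · intro e v
      rfl
  right_inv := by
    rintro (⟨e, v⟩ | ⟨i, v, hv⟩)
    · rfl
    · exact dif_neg (fun ⟨j, hj⟩ => hv j hj)

lemma RGraph_ones (D : GluingData m k) (A : MarkedGraph k) (hA : Function.Injective A.mark)
    (σ : D.RV A → Bool) :
    (D.RGraph A).G.ones σ = (∑ e, (D.Sig e).ones fun v => σ (D.vR A e v)) +
      ∑ i, ones' A fun v => σ (D.vL A i v) := by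
  unfold MGraph.ones ones'
  simp only [Finset.card_filter]
  have := (Fintype.sum_equiv (D.vEquiv A hA).symm
    (fun p => if σ ((D.vEquiv A hA).symm p) = true then 1 else 0)
    (fun u => if σ u = true then 1 else 0) (fun _ => rfl))
  refine Eq.trans this.symm ?_
  rw [Fintype.sum_sum_type, Fintype.sum_sigma, Fintype.sum_prod_type]
  rfl

lemma RGraph_mem (D : GluingData m k) (A : MarkedGraph k) (p : Sym2 (D.RV A)) :
    p ∈ (D.RGraph A).G.E ↔ (∃ i, ∃ q ∈ A.G.E, Sym2.map (D.vL A i) q = p) ∨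
      ∃ e, ∃ q ∈ (D.Sig e).E, Sym2.map (D.vR A e) q = p := by
  change p ∈ (∑ i : Fin m, A.G.E.map (Sym2.map (D.vL A i))) +
              ∑ e : D.EIdx, (D.Sig e).E.map (Sym2.map (D.vR A e)) ↔ _
  simp only [Multiset.mem_add, Multiset.mem_sum, Multiset.mem_map, Finset.mem_univ, true_and]

lemma RGraph_edge_rel (D : GluingData m k) (A : MarkedGraph k) (P : D.RV A → D.RV A → Prop)
    (hP : ∀ v w, P v w → P w v)  :
    (∀ v w, s(v, w) ∈ (D.RGraph A).G.E → P v w) ↔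
    (∀ i, ∀ v w, s(v, w) ∈ A.G.E → P (D.vL A i v) (D.vL A i w)) ∧
    (∀ e, ∀ v w, s(v, w) ∈ (D.Sig e).E → P (D.vR A e v) (D.vR A e w)) := by
  constructor
  · intro h
    refine ⟨fun i v w hvw => h _ _ ?_, fun e v w hvw => h _ _ ?_⟩
    · exact (D.RGraph_mem A _).2 (Or.inl ⟨i, _, hvw, rfl⟩)
    · exact (D.RGraph_mem A _).2 (Or.inr ⟨e, _, hvw, rfl⟩)
  · rintro ⟨h1, h2⟩ v w hvw
    rcases (D.RGraph_mem A _).1 hvw with ⟨i, q, hq, he⟩ | ⟨e, q, hq, he⟩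
    · induction q using Sym2.ind with
      | _ a b =>
        rcases Sym2.eq_iff.1 he with ⟨rfl, rfl⟩ | ⟨rfl, rfl⟩
        · exact h1 i a b hq
        · exact hP _ _ (h1 i a b hq)
    · induction q using Sym2.ind with
      | _ a b =>
        rcases Sym2.eq_iff.1 he with ⟨rfl, rfl⟩ | ⟨rfl, rfl⟩
        · exact h2 e a b hq
        · exact hP _ _ (h2 e a b hq)

lemma RGraph_indep (D : GluingData m k) (A : MarkedGraph k) (σ : D.RV A → Bool) :
    (D.RGraph A).G.Indep σ ↔ (∀ i, A.G.Indep fun v => σ (D.vL A i v)) ∧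
      ∀ e, (D.Sig e).Indep fun v => σ (D.vR A e v) :=
  D.RGraph_edge_rel A (fun v w => ¬(σ v = true ∧ σ w = true)) (fun _ _ h h' => h h'.symm)

lemma RGraph_mark_inj (D : GluingData m k) (A : MarkedGraph k) (hA : Function.Injective A.mark) :
    Function.Injective (D.RGraph A).mark := by
  intro a b hab
  have h : D.vEquiv A hA ((D.RGraph A).mark a) = D.vEquiv A hA ((D.RGraph A).mark b) := by rw [hab]
  have h' : (Sum.inl ⟨D.Phi a, D.root (D.Phi a)⟩ : (Σ e : D.EIdx, (D.Sig e).V) ⊕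
    (Fin m × {v : A.G.V // ∀ j, A.mark j ≠ v})) = Sum.inl ⟨D.Phi b, D.root (D.Phi b)⟩ := h
  have h2 := Sum.inl_injective h'
  exact D.Phi_inj (congrArg Sigma.fst h2)

/-- The recursion operator on weighted conditioned sums. -/
def recOp (D : GluingData m k) (lam : ℂ) (w : (Fin k → Bool) → ℂ) (x : Fin k → Bool) : ℂ :=
  ∑ ς : (e : D.EIdx) → (D.Sig e).V → Bool,
    if (∀ e, (D.Sig e).Indep (ς e)) ∧ ∀ j, ς (D.Phi j) (D.root (D.Phi j)) = x j then
      lam ^ (∑ e, (D.Sig e).ones (ς e)) *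
        ∏ i, w (fun l => ς (D.eOf l i) (D.att (D.eOf l i) i))
    else 0

lemma Zw_rec (D : GluingData m k) (lam : ℂ) (A : MarkedGraph k) (hA : Function.Injective A.mark)
    (φ : (A.G.V → Bool) → ℂ) (x : Fin k → Bool) :
    Zw lam (D.RGraph A) (fun σ => ∏ i, φ (fun v => σ (D.vL A i v))) x =
      D.recOp lam (Win lam A φ) x := by
  have h1 : D.recOp lam (Win lam A φ) x =
      ∑ p : ((e : D.EIdx) → (D.Sig e).V → Bool) × (Fin m → A.G.V → Bool),
        if (∀ i l, p.2 i (A.mark l) = p.1 (D.eOf l i) (D.att (D.eOf l i) i)) then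
          (if ((∀ i, A.G.Indep (p.2 i)) ∧ ∀ e, (D.Sig e).Indep (p.1 e)) ∧
            ∀ j, p.1 (D.Phi j) (D.root (D.Phi j)) = x j then
          lam ^ ((∑ e, (D.Sig e).ones (p.1 e)) + ∑ i, ones' A (p.2 i)) * ∏ i, φ (p.2 i) else 0)
        else 0 := by
    unfold recOp Win
    rw [Fintype.sum_prod_type]
    refine Finset.sum_congr rfl fun ς _ => ?_
    rw [Fintype.prod_sum]
    by_cases h : (∀ e, (D.Sig e).Indep (ς e)) ∧ ∀ j, ς (D.Phi j) (D.root (D.Phi j)) = x j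
    · rw [if_pos h, Finset.mul_sum]
      refine Finset.sum_congr rfl fun ρ _ => ?_
      by_cases h2 : (∀ i l, ρ i (A.mark l) = ς (D.eOf l i) (D.att (D.eOf l i) i))
      · rw [if_pos h2]
        by_cases h3 : ∀ i, A.G.Indep (ρ i)
        · rw [if_pos ⟨⟨h3, h.1⟩, h.2⟩]
          have : ∀ i, (A.G.Indep (ρ i) ∧
            ∀ j, ρ i (A.mark j) = ς (D.eOf j i) (D.att (D.eOf j i) i)) := fun i => ⟨h3 i, h2 i⟩
          simp only [this, implies_true, and_true, if_true]
          rw [Finset.prod_mul_distrib, Finset.prod_pow_eq_pow_sum, pow_add, mul_assoc]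
        · rw [if_neg (fun h' => h3 h'.1.1)]
          push Not at h3
          obtain ⟨i, hi⟩ := h3
          rw [Finset.prod_eq_zero (Finset.mem_univ i) (if_neg fun h' => hi h'.1), mul_zero]
      · rw [if_neg h2]
        push Not at h2
        obtain ⟨i, l, hi⟩ := h2
        rw [Finset.prod_eq_zero (Finset.mem_univ i) (if_neg fun h' => hi (h'.2 l)), mul_zero]
    · rw [if_neg h]
      symm
      refine Finset.sum_eq_zero fun ρ _ => ?_
      have : ¬ (((∀ i, A.G.Indep (ρ i)) ∧ ∀ e, (D.Sig e).Indep (ς e)) ∧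
            ∀ j, ς (D.Phi j) (D.root (D.Phi j)) = x j) := fun h' => h ⟨h'.1.2, h'.2⟩
      simp only [if_neg this, ite_self]
  rw [h1, ← Finset.sum_filter]
  unfold Zw
  refine Finset.sum_nbij (fun σ => (fun e v => σ (D.vR A e v), fun i v => σ (D.vL A i v))) ?_ ?_ ?_ ?_
  · intro σ _
    simp only [Finset.mem_filter, Finset.mem_univ, true_and]
    intro i l
    rw [D.vL_mark A]
  · intro σ _ σ' _ h
    simp only [Prod.mk.injEq] at h
    funext u
    refine D.RV_ind A (P := fun u => σ u = σ' u) ?_ ?_ u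
    · intro i v
      exact congrFun (congrFun h.2 i) v
    · intro e v
      exact congrFun (congrFun h.1 e) v
  · rintro ⟨ς, ρ⟩ h
    simp only [Finset.coe_filter, Finset.mem_univ, true_and, Set.mem_ofPred_eq] at h
    refine ⟨D.RVlift A ρ ς ?_, Finset.mem_coe.2 (Finset.mem_univ _), rfl⟩
    intro e i hi
    rw [h i (D.label e), D.eOf_eq e i hi]
  · intro σ _
    have e1 := D.RGraph_indep A σ
    have e2 := D.RGraph_ones A hA σ
    simp only
    rw [e2]
    refine if_congr ?_ rfl rfl
    exact and_congr e1 Iff.rfl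

end GluingData

/-! ### Part 4: bounded connectors -/

/-- Cardinality of a fibre. -/
def fibc {X Y : Type} [Fintype X] (f : X → Y) (y : Y) : ℕ :=
  (Finset.univ.filter fun x => f x = y).card

/-- The vertices of `U` split into connectors (fibres of `κ`) of bounded size, each meeting a
bounded number of blocks; distinct marked vertices lie in distinct connectors. -/
def GoodSkel {k : ℕ} (N : Fin k → ℕ) (S : ℕ) (U : MarkedGraph k) (B : Type) [Fintype B]
    (β : B → Fin k → U.G.V) : Prop :=
  ∃ (C : Type) (κ : U.G.V → C) (q : Fin k → C), Function.Injective q ∧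
    (∀ j, κ (U.mark j) = q j) ∧
    (∀ v w, s(v, w) ∈ U.G.E → κ v = κ w) ∧
    (∀ c, fibc κ c ≤ S ∧ fibc (fun p : B × Fin k => κ (β p.1 p.2)) c ≤ S) ∧
    (∀ j, fibc κ (q j) ≤ N j ∧ fibc (fun p : B × Fin k => κ (β p.1 p.2)) (q j) ≤ N j)

namespace GluingData

variable {m k : ℕ}

lemma goodSkel_step (D : GluingData m k) (N : Fin k → ℕ) (S V : ℕ)
    (hV : ∀ e, Fintype.card (D.Sig e).V ≤ V)
    (hP : ∀ j, D.PeriodicLabel j → N (D.Lam j) ≤ N j ∧ (D.edge (D.Phi j)).card = 1 ∧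
      ∀ v w : (D.Sig (D.Phi j)).V, v = w)
    (hQ : ∀ j, ¬ D.PeriodicLabel j → V + m * N (D.Lam j) ≤ N j)
    (hS : ∀ l, V + m * N l ≤ S)
    (U : MarkedGraph k) (B : Type) [Fintype B] (β : B → Fin k → U.G.V)
    (h : GoodSkel N S U B β) :
    GoodSkel N S (D.RGraph U) (Fin m × B) (fun p l => D.vL U p.1 (β p.2 l)) := by
  obtain ⟨C, κ, q, hq, hmark, hadj, hsz, hopen⟩ := h
  let f : Fin m → U.G.V → (Fin m × C) ⊕ D.EIdx := fun i v =>
    if h : ∃ l, κ v = q l then Sum.inr (D.eOf h.choose i) else Sum.inl (i, κ v)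
  have hf1 : ∀ i v l, κ v = q l → f i v = Sum.inr (D.eOf l i) := by
    intro i v l hl
    have h : ∃ l, κ v = q l := ⟨l, hl⟩
    have e : h.choose = l := hq (h.choose_spec.symm.trans hl)
    simp only [f, dif_pos h, e]
  have hf2 : ∀ i v, (¬ ∃ l, κ v = q l) → f i v = Sum.inl (i, κ v) := fun i v h => dif_neg h
  let κ' : D.RV U → (Fin m × C) ⊕ D.EIdx := D.RVlift U f (fun e _ => Sum.inr e) (by
    intro e i hi
    rw [hf1 i _ (D.label e) (hmark _), D.eOf_eq e i hi])
  have hL : ∀ i v, κ' (D.vL U i v) = f i v := fun i v => rfl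
  have hR : ∀ e v, κ' (D.vR U e v) = Sum.inr e := fun e v => rfl
  have hinr : ∀ i v e, f i v = Sum.inr e → κ v = q (D.label e) ∧ i ∈ D.edge e := by
    intro i v e h
    by_cases h' : ∃ l, κ v = q l
    · obtain ⟨l, hl⟩ := h'
      rw [hf1 i v l hl] at h
      have := Sum.inr_injective h
      subst this
      rw [D.eOf_label]
      exact ⟨hl, D.eOf_mem l i⟩
    · rw [hf2 i v h'] at h
      simp at h
  have hinl : ∀ i v i' c, f i v = Sum.inl (i', c) → i = i' ∧ κ v = c := by
    intro i v i' c h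
    by_cases h' : ∃ l, κ v = q l
    · obtain ⟨l, hl⟩ := h'
      rw [hf1 i v l hl] at h
      simp at h
    · rw [hf2 i v h'] at h
      simpa using h
  -- fibres over closed connectors of copies
  have b1 : ∀ i c, fibc κ' (Sum.inl (i, c)) ≤ S := by
    intro i c
    unfold fibc
    refine le_trans (Finset.card_le_card (t := (Finset.univ.filter fun v => κ v = c).image
      (D.vL U i)) ?_) (Finset.card_image_le.trans (hsz c).1)
    intro u hu0
    simp only [Finset.mem_filter, Finset.mem_univ, true_and] at hu0
    revert hu0
    refine D.RV_ind U (P := fun u => κ' u = Sum.inl (i, c) →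
      u ∈ (Finset.univ.filter fun v => κ v = c).image (D.vL U i)) ?_ ?_ u
    · intro i' v hu
      simp only [Finset.mem_filter, Finset.mem_univ, true_and, hL] at hu
      obtain ⟨rfl, h2⟩ := hinl _ _ _ _ hu
      exact Finset.mem_image_of_mem _ (by simp [h2])
    · intro e v hu
      simp [hR] at hu
  have b2 : ∀ i c, fibc (fun p : (Fin m × B) × Fin k =>
      κ' (D.vL U p.1.1 (β p.1.2 p.2))) (Sum.inl (i, c)) ≤ S := by
    intro i c
    unfold fibc
    refine le_trans (Finset.card_le_card (t := (Finset.univ.filter fun p : B × Fin k =>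
      κ (β p.1 p.2) = c).image (fun p => ((i, p.1), p.2))) ?_)
      (Finset.card_image_le.trans (hsz c).2)
    rintro ⟨⟨i', b⟩, l⟩ hu
    simp only [Finset.mem_filter, Finset.mem_univ, true_and, hL] at hu
    obtain ⟨rfl, h2⟩ := hinl _ _ _ _ hu
    exact Finset.mem_image.2 ⟨(b, l), by simp [h2], rfl⟩
  -- fibres over new connectors
  have b3 : ∀ e, fibc κ' (Sum.inr e) ≤
      V + (D.edge e).card * N (D.label e) := by
    intro e
    unfold fibc
    refine le_trans (Finset.card_le_card (t := Finset.univ.image (D.vR U e) ∪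
      (D.edge e).biUnion fun i => (Finset.univ.filter fun v => κ v = q (D.label e)).image
        (D.vL U i)) ?_) ?_
    · intro u hu0
      simp only [Finset.mem_filter, Finset.mem_univ, true_and] at hu0
      revert hu0
      refine D.RV_ind U (P := fun u => κ' u = Sum.inr e →
        u ∈ Finset.univ.image (D.vR U e) ∪
      (D.edge e).biUnion fun i => (Finset.univ.filter fun v => κ v = q (D.label e)).image
        (D.vL U i)) ?_ ?_ u
      · intro i v hu
        simp only [Finset.mem_filter, Finset.mem_univ, true_and, hL] at hu
        obtain ⟨h1, h2⟩ := hinr _ _ _ hu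
        refine Finset.mem_union_right _ (Finset.mem_biUnion.2 ⟨i, h2, ?_⟩)
        exact Finset.mem_image_of_mem _ (by simp [h1])
      · intro e' v hu
        simp only [Finset.mem_filter, Finset.mem_univ, true_and, hR] at hu
        have := Sum.inr_injective hu
        subst this
        exact Finset.mem_union_left _ (Finset.mem_image_of_mem _ (Finset.mem_univ _))
    · refine (Finset.card_union_le _ _).trans (Nat.add_le_add ?_ ?_)
      · exact Finset.card_image_le.trans (by rw [Finset.card_univ]; exact hV e)
      · exact Finset.card_biUnion_le_card_mul _ _ _
          (fun i _ => Finset.card_image_le.trans (hopen _).1)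
  have b4 : ∀ e, fibc (fun p : (Fin m × B) × Fin k =>
      κ' (D.vL U p.1.1 (β p.1.2 p.2))) (Sum.inr e) ≤ (D.edge e).card * N (D.label e) := by
    intro e
    unfold fibc
    refine le_trans (Finset.card_le_card (t := (D.edge e).biUnion fun i =>
      (Finset.univ.filter fun p : B × Fin k =>
      κ (β p.1 p.2) = q (D.label e)).image (fun p => ((i, p.1), p.2))) ?_)
      (Finset.card_biUnion_le_card_mul _ _ _
          (fun i _ => Finset.card_image_le.trans (hopen _).2))
    rintro ⟨⟨i, b⟩, l⟩ hu
    simp only [Finset.mem_filter, Finset.mem_univ, true_and, hL] at hu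
    obtain ⟨h1, h2⟩ := hinr _ _ _ hu
    exact Finset.mem_biUnion.2 ⟨i, h2, Finset.mem_image.2 ⟨(b, l), by simp [h1], rfl⟩⟩
  -- fibres over periodic open connectors
  have b5 : ∀ j, D.PeriodicLabel j → fibc κ' (Sum.inr (D.Phi j)) ≤
      N (D.Lam j) := by
    intro j hj
    obtain ⟨-, hc, hs⟩ := hP j hj
    obtain ⟨i₀, hi₀⟩ := Finset.card_eq_one.1 hc
    unfold fibc
    refine le_trans (Finset.card_le_card (t := (Finset.univ.filter fun v =>
      κ v = q (D.label (D.Phi j))).image (D.vL U i₀)) ?_)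
      (Finset.card_image_le.trans (hopen _).1)
    intro u hu0
    simp only [Finset.mem_filter, Finset.mem_univ, true_and] at hu0
    revert hu0
    refine D.RV_ind U (P := fun u => κ' u = Sum.inr (D.Phi j) →
      u ∈ (Finset.univ.filter fun v =>
      κ v = q (D.label (D.Phi j))).image (D.vL U i₀)) ?_ ?_ u
    · intro i v hu
      simp only [Finset.mem_filter, Finset.mem_univ, true_and, hL] at hu
      obtain ⟨h1, h2⟩ := hinr _ _ _ hu
      rw [hi₀, Finset.mem_singleton] at h2
      subst h2
      exact Finset.mem_image_of_mem _ (by simp [h1])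
    · intro e' v hu
      simp only [Finset.mem_filter, Finset.mem_univ, true_and, hR] at hu
      have := Sum.inr_injective hu
      subst this
      rw [hs v (D.att (D.Phi j) i₀), ← D.vL_mark' U _ i₀ (by rw [hi₀]; simp)]
      exact Finset.mem_image_of_mem _ (by simp [hmark])
  have hcm : ∀ e, (D.edge e).card * N (D.label e) ≤ m * N (D.label e) := by
    intro e
    apply Nat.mul_le_mul_right
    simpa using Finset.card_le_univ (D.edge e)
  refine ⟨(Fin m × C) ⊕ D.EIdx, κ', fun j => Sum.inr (D.Phi j), ?_, fun j => rfl, ?_, ?_, ?_⟩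
  · intro a b hab
    exact D.Phi_inj (Sum.inr_injective hab)
  · refine (D.RGraph_edge_rel U (fun v w => κ' v = κ' w) (fun _ _ h => h.symm)).2 ⟨?_, ?_⟩
    · intro i v w hvw
      have := hadj v w hvw
      simp only [hL, f, this]
    · intro e v w _
      rw [hR, hR]
  · rintro (⟨i, c⟩ | e)
    · exact ⟨b1 i c, b2 i c⟩
    · have := hcm e
      have := hS (D.label e)
      have h3 := b3 e
      have h4 := b4 e
      exact ⟨le_trans h3 (by omega), le_trans h4 (by omega)⟩
  · intro j
    by_cases hj : D.PeriodicLabel j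
    · obtain ⟨h1, h2, -⟩ := hP j hj
      refine ⟨(b5 j hj).trans h1, (b4 (D.Phi j)).trans ?_⟩
      rw [h2, one_mul]
      exact h1
    · have := hcm (D.Phi j)
      have hq' := hQ j hj
      have h3 := b3 (D.Phi j)
      have h4 := b4 (D.Phi j)
      unfold Lam at hq'
      exact ⟨le_trans h3 (by omega), le_trans h4 (by omega)⟩

lemma exists_height (D : GluingData m k) (hm : 1 ≤ m) (V : ℕ) :
    ∃ N : Fin k → ℕ, (∀ j, 1 ≤ N j) ∧ (∀ j, D.PeriodicLabel j → N (D.Lam j) ≤ N j) ∧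
      (∀ j, ¬ D.PeriodicLabel j → V + m * N (D.Lam j) ≤ N j) := by
  have hex : ∀ j, ∃ t, D.PeriodicLabel (D.Lam^[t] j) := by
    intro j
    obtain ⟨a, b, hab, h⟩ := Finite.exists_ne_map_eq_of_infinite (fun t : ℕ => D.Lam^[t] j)
    replace h : D.Lam^[a] j = D.Lam^[b] j := h
    rcases lt_or_gt_of_ne hab with hlt | hlt
    · refine ⟨a, b - a, by omega, ?_⟩
      rw [← Function.iterate_add_apply, show b - a + a = b by omega, h]
    · refine ⟨b, a - b, by omega, ?_⟩
      rw [← Function.iterate_add_apply, show a - b + b = a by omega, h]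
  let F : ℕ → ℕ := fun b => V + m * b
  let ht : Fin k → ℕ := fun j => Nat.find (hex j)
  have hF : ∀ t, 1 ≤ F^[t] 1 := by
    intro t
    induction t with
    | zero => simp
    | succ t ih =>
      rw [Function.iterate_succ_apply']
      simp only [F]
      nlinarith
  refine ⟨fun j => F^[ht j] 1, fun j => hF _, ?_, ?_⟩
  · intro j hj
    have : ht (D.Lam j) = 0 := by
      simp only [ht, Nat.find_eq_zero, Function.iterate_zero, id]
      obtain ⟨p, hp, h⟩ := hj
      exact ⟨p, hp, by rw [← Function.iterate_succ_apply, Function.iterate_succ_apply', h]⟩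
    simp only [this]
    exact hF _
  · intro j hj
    have h1 : ht j = ht (D.Lam j) + 1 := by
      exact Nat.find_comp_succ (hex j) (hex (D.Lam j)) hj
    simp only [h1, Function.iterate_succ_apply']
    exact le_refl _

end GluingData

/-! ### Part 5: the maximally independent starting graph -/

lemma indep_mono (G : MGraph) (σ σ' : G.V → Bool) (h : G.Indep σ)
    (hle : ∀ v, σ' v = true → σ v = true) : G.Indep σ' :=
  fun v w hvw hh => h v w hvw ⟨hle _ hh.1, hle _ hh.2⟩

lemma maxIndep_fun {k : ℕ} (A : MarkedGraph k) (h : MaxIndependent A) :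
    (∀ x : Fin k → Bool, ∃ σ : A.G.V → Bool, (A.G.Indep σ ∧ ∀ j, σ (A.mark j) = x j) ∧
      ∀ σ', (A.G.Indep σ' ∧ ∀ j, σ' (A.mark j) = x j) → A.G.ones σ' ≤ A.G.ones σ ∧
        (A.G.ones σ' = A.G.ones σ → σ' = σ)) ∧
    (∀ σ₁ σ₀ : A.G.V → Bool, (A.G.Indep σ₁ ∧ ∀ j, σ₁ (A.mark j) = oneT k j) →
      (∀ σ', (A.G.Indep σ' ∧ ∀ j, σ' (A.mark j) = oneT k j) → A.G.ones σ' ≤ A.G.ones σ₁) →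
      (A.G.Indep σ₀ ∧ ∀ j, σ₀ (A.mark j) = zeroT k j) →
      (∀ σ', (A.G.Indep σ' ∧ ∀ j, σ' (A.mark j) = zeroT k j) → A.G.ones σ' ≤ A.G.ones σ₀) →
      A.G.ones σ₁ = A.G.ones σ₀ + k) := by
  have toF : ∀ (σ : A.G.V → Bool) x, (A.G.Indep σ ∧ ∀ j, σ (A.mark j) = x j) →
      A.G.IndepFinset (Finset.univ.filter fun v => σ v = true) ∧
      Agrees A (Finset.univ.filter fun v => σ v = true) x := by
    intro σ x h
    refine ⟨fun v hv w hw hvw => h.1 v w hvw ⟨by simpa using hv, by simpa using hw⟩, fun j => ?_⟩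
    simp [h.2 j]
  have ofF : ∀ (I : Finset A.G.V) x, (A.G.IndepFinset I ∧ Agrees A I x) →
      (A.G.Indep (fun v => decide (v ∈ I)) ∧ ∀ j, (fun v => decide (v ∈ I)) (A.mark j) = x j) := by
    intro I x h
    refine ⟨fun v w hvw hh => h.1 v (by simpa using hh.1) w (by simpa using hh.2) hvw, fun j => ?_⟩
    have := h.2 j
    rw [Bool.eq_iff_iff]
    simpa using this
  have cF : ∀ I : Finset A.G.V, A.G.ones (fun v => decide (v ∈ I)) = I.card := by
    intro I
    unfold MGraph.ones
    congr 1
    ext v; simp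
  refine ⟨fun x => ?_, ?_⟩
  · obtain ⟨I, hI, hmax, huniq⟩ := h.1 x
    refine ⟨fun v => decide (v ∈ I), ofF I x hI, fun σ' hσ' => ?_⟩
    rw [cF]
    refine ⟨hmax _ (toF _ _ hσ'), fun he => ?_⟩
    have := huniq _ (toF _ _ hσ') he
    funext v
    rw [← this]
    simp
  · intro σ₁ σ₀ h1 m1 h0 m0
    refine h.2 _ _ ⟨toF _ _ h1, fun J hJ => ?_⟩ ⟨toF _ _ h0, fun J hJ => ?_⟩
    · have := m1 _ (ofF _ _ hJ)
      rwa [cF] at this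
    · have := m0 _ (ofF _ _ hJ)
      rwa [cF] at this

lemma maxIndep_struct {k : ℕ} (A : MarkedGraph k) (h : MaxIndependent A) :
    Function.Injective A.mark ∧ ∃ d, ∀ x : Fin k → Bool, ∃ σ : A.G.V → Bool,
      (A.G.Indep σ ∧ ∀ j, σ (A.mark j) = x j) ∧ ones' A σ = d ∧
      ∀ σ', (A.G.Indep σ' ∧ ∀ j, σ' (A.mark j) = x j) → σ' ≠ σ → ones' A σ' < d := by
  obtain ⟨h1, h2⟩ := maxIndep_fun A h
  choose s hs hm using h1
  have hinj : Function.Injective A.mark := by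
    intro a b hab
    have e1 := (hs (unitT a)).2 a
    have e2 := (hs (unitT a)).2 b
    rw [hab, e2] at e1
    by_contra hne
    simp [unitT, Ne.symm hne] at e1
  have hon : ∀ (σ : A.G.V → Bool) (x : Fin k → Bool), (∀ j, σ (A.mark j) = x j) →
      A.G.ones σ = wt x + ones' A σ := by
    intro σ x hx
    rw [ones_eq A hinj, show (fun j => σ (A.mark j)) = x from funext hx]
  have hcut : ∀ (σ : A.G.V → Bool) (x : Fin k → Bool), (A.G.Indep σ ∧ ∀ j, x j = true → σ (A.mark j) = true) →
      ∃ σ' : A.G.V → Bool, (A.G.Indep σ' ∧ ∀ j, σ' (A.mark j) = x j) ∧ ones' A σ' = ones' A σ := by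
    intro σ x hx
    refine ⟨fun v => if ∃ j, A.mark j = v ∧ x j = false then false else σ v,
      ⟨indep_mono _ _ _ hx.1 ?_, ?_⟩, ?_⟩
    · intro v hv
      split_ifs at hv
      exact hv
    · intro j
      cases hj : x j
      · exact if_pos ⟨j, rfl, hj⟩
      · beta_reduce
        rw [if_neg, hx.2 j hj]
        rintro ⟨j', hj', hx'⟩
        rw [hinj hj', hj] at hx'
        exact absurd hx' (by simp)
    · unfold ones'
      congr 1
      ext ⟨v, hv⟩
      simp only [Finset.mem_filter, Finset.mem_univ, true_and]
      rw [if_neg]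
      rintro ⟨j, hj, -⟩
      exact hv j hj
  have w0 : wt (zeroT k) = 0 := by simp [wt, zeroT]
  have w1 : wt (oneT k) = k := by simp [wt, oneT]
  have hd : ∀ x, ones' A (s x) = ones' A (s (zeroT k)) := by
    intro x
    apply le_antisymm
    · obtain ⟨σ', hσ', ho⟩ := hcut (s x) (zeroT k) ⟨(hs x).1, fun j hj => by simp [zeroT] at hj⟩
      have := (hm _ σ' hσ').1
      rw [hon _ _ hσ'.2, hon _ _ (hs _).2] at this
      omega
    · have e := h2 (s (oneT k)) (s (zeroT k)) (hs _) (fun σ' h' => (hm _ σ' h').1) (hs _)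
        (fun σ' h' => (hm _ σ' h').1)
      rw [hon _ _ (hs _).2, hon _ _ (hs _).2] at e
      obtain ⟨σ', hσ', ho⟩ := hcut (s (oneT k)) x ⟨(hs _).1, fun j hj => by
        rw [(hs _).2]; rfl⟩
      have := (hm _ σ' hσ').1
      rw [hon _ _ hσ'.2, hon _ _ (hs _).2] at this
      omega
  refine ⟨hinj, ones' A (s (zeroT k)), fun x => ⟨s x, hs x, ?_, ?_⟩⟩
  · exact hd x
  · intro σ' hσ' hne
    obtain ⟨a, b⟩ := hm x σ' hσ'
    rw [hon _ _ hσ'.2, hon _ _ (hs _).2] at a b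
    have := hd x
    have hne' : ones' A σ' ≠ ones' A (s x) := fun he => hne (b (by omega))
    omega

lemma win_bound {k : ℕ} (A : MarkedGraph k) (d : ℕ) (x : Fin k → Bool) (σ : A.G.V → Bool)
    (h1 : A.G.Indep σ ∧ ∀ j, σ (A.mark j) = x j) (h2 : ones' A σ = d)
    (h3 : ∀ σ', (A.G.Indep σ' ∧ ∀ j, σ' (A.mark j) = x j) → σ' ≠ σ → ones' A σ' < d)
    (lam : ℂ) (hl : 1 ≤ ‖lam‖) :
    ‖Win lam A (fun _ => 1) x / lam ^ d - 1‖ ≤ 2 ^ Fintype.card A.G.V / ‖lam‖ := by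
  have hl0 : 0 < ‖lam‖ := by linarith
  have hlam : lam ≠ 0 := norm_pos_iff.1 hl0
  have hld : lam ^ d ≠ 0 := pow_ne_zero _ hlam
  have e : Win lam A (fun _ => 1) x / lam ^ d - 1 =
      ∑ σ' ∈ Finset.univ.erase σ, (if A.G.Indep σ' ∧ (∀ j, σ' (A.mark j) = x j) then
        lam ^ ones' A σ' * 1 else 0) / lam ^ d := by
    unfold Win
    rw [← Finset.add_sum_erase _ _ (Finset.mem_univ σ), if_pos h1, h2, add_div, mul_one,
      div_self hld, Finset.sum_div]
    ring
  rw [e]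
  refine (norm_sum_le _ _).trans ?_
  have : ∀ σ' ∈ Finset.univ.erase σ, ‖(if A.G.Indep σ' ∧ (∀ j, σ' (A.mark j) = x j) then
        lam ^ ones' A σ' * 1 else 0) / lam ^ d‖ ≤ 1 / ‖lam‖ := by
    intro σ' hσ'
    split_ifs with hh
    · have hlt := h3 σ' hh (Finset.ne_of_mem_erase hσ')
      rw [mul_one, norm_div, norm_pow, norm_pow, div_le_div_iff₀ (by positivity) hl0, one_mul,
        ← pow_succ]
      exact pow_le_pow_right₀ hl hlt
    · simp
  refine (Finset.sum_le_card_nsmul _ _ _ this).trans ?_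
  rw [nsmul_eq_mul, mul_one_div]
  gcongr
  have : (Finset.univ.erase σ).card ≤ 2 ^ Fintype.card A.G.V := by
    refine (Finset.card_le_univ _).trans ?_
    simp
  exact_mod_cast this

/-! ### Part 6: assembly -/

/-- The edgeless graph on the marks. -/
def Ek (k : ℕ) : MarkedGraph k where
  G := { V := Fin k, fin := inferInstance, E := 0 }
  mark := id

lemma fibc_inj {X Y : Type} [Fintype X] (f : X → Y) (hf : Function.Injective f) (y : Y) :
    fibc f y ≤ 1 := by
  unfold fibc
  rw [Finset.card_le_one]
  intro a ha b hb
  exact hf ((Finset.mem_filter.1 ha).2.trans (Finset.mem_filter.1 hb).2.symm)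

lemma goodSkel_base {k : ℕ} (N : Fin k → ℕ) (S : ℕ) (hN : ∀ j, 1 ≤ N j) (hS : 1 ≤ S) :
    GoodSkel N S (Ek k) Unit (fun _ l => l) := by
  have h1 : ∀ c : Fin k, fibc (fun v : (Ek k).G.V => (v : Fin k)) c ≤ 1 :=
    fun c => fibc_inj _ (fun a b h => h) c
  have h2 : ∀ c : Fin k, fibc (fun p : Unit × Fin k => p.2) c ≤ 1 :=
    fun c => fibc_inj _ (fun a b h => Prod.ext rfl h) c
  refine ⟨Fin k, fun v => v, id, Function.injective_id, fun j => rfl, ?_, ?_, ?_⟩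
  · intro v w h
    exact absurd h (Multiset.notMem_zero _)
  · exact fun c => ⟨(h1 c).trans hS, (h2 c).trans hS⟩
  · exact fun c => ⟨(h1 c).trans (hN c), (h2 c).trans (hN c)⟩

lemma Zw_base {k : ℕ} (lam : ℂ) (h : (Fin k → Bool) → ℂ) (x : Fin k → Bool) :
    Zw lam (Ek k) (fun σ => h (fun l => σ l)) x = lam ^ wt x * h x := by
  unfold Zw
  rw [Finset.sum_eq_single (show (Ek k).G.V → Bool from x)]
  · rw [if_pos]
    · rfl
    · exact ⟨fun v w h => absurd h (Multiset.notMem_zero _), fun j => rfl⟩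
  · intro σ _ hne
    rw [if_neg]
    rintro ⟨-, h⟩
    exact hne (funext h)
  · intro h; exact absurd (Finset.mem_univ _) h

lemma main_ind {m k : ℕ} (D : GluingData m k) (N : Fin k → ℕ) (S V : ℕ)
    (hV : ∀ e, Fintype.card (D.Sig e).V ≤ V)
    (hP : ∀ j, D.PeriodicLabel j → N (D.Lam j) ≤ N j ∧ (D.edge (D.Phi j)).card = 1 ∧
      ∀ v w : (D.Sig (D.Phi j)).V, v = w)
    (hQ : ∀ j, ¬ D.PeriodicLabel j → V + m * N (D.Lam j) ≤ N j)
    (hS : ∀ l, V + m * N l ≤ S) (hN : ∀ j, 1 ≤ N j) (hS1 : 1 ≤ S)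
    (G0 : MarkedGraph k) (hG0 : Function.Injective G0.mark) (n : ℕ) :
    Function.Injective ((D.RGraph)^[n] G0).mark ∧
    ∃ (U : MarkedGraph k) (B : Type) (_ : Fintype B) (β : B → Fin k → U.G.V),
      Function.Injective U.mark ∧ GoodSkel N S U B β ∧
      ∀ lam : ℂ, lam ≠ 0 → ∀ x, Zw lam ((D.RGraph)^[n] G0) (fun _ => 1) x =
        Zw lam U (fun σ => ∏ b, Win lam G0 (fun _ => 1) (fun l => σ (β b l))) x := by
  induction n with
  | zero =>
    refine ⟨hG0, Ek k, Unit, inferInstance, fun _ l => l, Function.injective_id,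
      goodSkel_base N S hN hS1, ?_⟩
    intro lam _ x
    rw [Function.iterate_zero, id, Zw_eq lam G0 hG0]
    simp only [Finset.univ_unique, Finset.prod_singleton]
    exact (Zw_base lam (Win lam G0 fun _ => 1) x).symm
  | succ n ih =>
    obtain ⟨hi, U, B, hB, β, hU, hsk, hz⟩ := ih
    rw [Function.iterate_succ_apply']
    refine ⟨D.RGraph_mark_inj _ hi, D.RGraph U, Fin m × B, inferInstance,
      fun p l => D.vL U p.1 (β p.2 l), D.RGraph_mark_inj _ hU,
      D.goodSkel_step N S V hV hP hQ hS U B β hsk, ?_⟩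
    intro lam hlam x
    have hw : Win lam ((D.RGraph)^[n] G0) (fun _ => 1) =
        Win lam U (fun σ => ∏ b, Win lam G0 (fun _ => 1) (fun l => σ (β b l))) := by
      funext y
      have := hz lam hlam y
      rw [Zw_eq lam _ hi, Zw_eq lam _ hU] at this
      exact mul_left_cancel₀ (pow_ne_zero _ hlam) this
    have e1 := D.Zw_rec lam _ hi (fun _ => 1) x
    have e2 := D.Zw_rec lam U hU
      (fun σ => ∏ b, Win lam G0 (fun _ => 1) (fun l => σ (β b l))) x
    rw [hw, ← e2] at e1
    simp only [Finset.prod_const_one] at e1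
    rw [e1]
    congr 1
    funext σ
    exact (Fintype.prod_prod_type (fun p : Fin m × B =>
      Win lam G0 (fun _ => 1) (fun l => σ (D.vL U p.1 (β p.2 l))))).symm

lemma sum_Zw {k : ℕ} (lam : ℂ) (A : MarkedGraph k) (φ : (A.G.V → Bool) → ℂ) :
    ∑ x, Zw lam A φ x = wsum (hcW lam A.G) φ := by
  unfold Zw wsum hcW
  rw [Finset.sum_comm]
  refine Finset.sum_congr rfl fun σ _ => ?_
  rw [Finset.sum_eq_single (fun j => σ (A.mark j))]
  · by_cases h : A.G.Indep σ <;> simp [h]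
  · intro x _ hne
    rw [if_neg]
    rintro ⟨-, h⟩
    exact hne (funext h).symm
  · intro h; exact absurd (Finset.mem_univ _) h

lemma skel_ne_zero {k : ℕ} (N : Fin k → ℕ) (S : ℕ) (U : MarkedGraph k) (B : Type) [Fintype B]
    (β : B → Fin k → U.G.V) (hsk : GoodSkel N S U B β) (lam : ℂ) (h : (Fin k → Bool) → ℂ)
    (d : ℕ) (M : ℝ) (hM0 : 0 ≤ M) (hl0 : 1 ≤ ‖lam‖)
    (hh : ∀ x, ‖h x / lam ^ d - 1‖ ≤ M / ‖lam‖) (hl1 : 2 * (2 : ℝ) ^ S ≤ ‖lam‖)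
    (hl2 : 2 * ((2 * (2 : ℝ) ^ S) ^ k * (M * 3 ^ (k * S))) ≤ ‖lam‖) :
    wsum (hcW lam U.G) (fun σ => ∏ b, h (fun l => σ (β b l))) ≠ 0 := by
  obtain ⟨C, κ, q, hq, hmark, hadj, hsz, hopen⟩ := hsk
  have hp : 0 < ‖lam‖ := by linarith
  have hlam : lam ≠ 0 := norm_pos_iff.1 hp
  have key := cluster_ne_zero (B := B) κ (hcW lam U.G) (2 * 2 ^ S) (M / ‖lam‖) k S
    (fun b => Finset.univ.image fun l => κ (β b l))
    (fun b => Finset.card_image_le.trans (by simp))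
    (by
      intro c
      refine le_trans ?_ (hsz c).2
      refine le_trans (Finset.card_le_card (t := (Finset.univ.filter fun p : B × Fin k =>
        κ (β p.1 p.2) = c).image Prod.fst) ?_) Finset.card_image_le
      intro b hb
      simp only [Finset.mem_filter, Finset.mem_univ, true_and, Finset.mem_image] at hb
      obtain ⟨l, hl⟩ := hb
      exact Finset.mem_image.2 ⟨(b, l), by simp [hl], rfl⟩)
    (by nlinarith [one_le_pow₀ (n := S) (show (1 : ℝ) ≤ 2 by norm_num)])
    (by positivity)
    (by
      have : (2 * (2 : ℝ) ^ S) ^ k * (M / ‖lam‖ * 3 ^ (k * S)) =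
        ((2 * (2 : ℝ) ^ S) ^ k * (M * 3 ^ (k * S))) / ‖lam‖ := by ring
      rw [this, div_le_iff₀ hp]
      linarith)
    (fun c F M' hF => hcW_cond lam U.G κ hadj S (fun c => (hsz c).1) hl1 c F M' hF)
    ⟨fun _ => false, by
      unfold hcW
      rw [if_pos (indep_false _)]
      exact pow_ne_zero _ hlam⟩
    (fun b σ => h (fun l => σ (β b l)) / lam ^ d)
    (fun b σ => hh _)
    (by
      intro b σ σ' he
      have : (fun l => σ (β b l)) = fun l => σ' (β b l) := by
        funext l
        exact he _ (Finset.mem_image_of_mem _ (Finset.mem_univ l))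
      simp only [this])
  intro h0
  apply key
  have e : ∀ σ : U.G.V → Bool, ∏ b, (h (fun l => σ (β b l)) / lam ^ d) =
      (∏ b, h (fun l => σ (β b l))) * ((lam ^ d) ^ Fintype.card B)⁻¹ := by
    intro σ
    rw [Finset.prod_div_distrib, Finset.prod_const, Finset.card_univ, div_eq_mul_inv]
  simp only [e]
  unfold wsum at h0 ⊢
  simp only [← mul_assoc]
  rw [← Finset.sum_mul, h0, zero_mul]

-- STATEMENT 8
theorem stmt8 {m k : ℕ} (hm : 2 ≤ m) (hk : 2 ≤ k) (D : GluingData m k)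
    (hstable : D.Stable) (hexp : D.Expanding)
    (G0 : MarkedGraph k) (hmax : MaxIndependent G0) :
    ∃ C : ℝ, 0 < C ∧ ∀ (n : ℕ) (lam : ℂ),
      Zfull ℂ lam ((D.RGraph)^[n] G0).G = 0 → ‖lam‖ ≤ C := by
  obtain ⟨hinj, d, hd⟩ := maxIndep_struct G0 hmax
  let V : ℕ := ∑ e, Fintype.card (D.Sig e).V
  have hV : ∀ e, Fintype.card (D.Sig e).V ≤ V := fun e =>
    Finset.single_le_sum (f := fun e => Fintype.card (D.Sig e).V) (fun _ _ => Nat.zero_le _)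
      (Finset.mem_univ e)
  obtain ⟨N, hN1, hNp, hNq⟩ := D.exists_height (by omega) V
  let S : ℕ := 1 + V + m * ∑ j, N j
  have hS : ∀ l, V + m * N l ≤ S := by
    intro l
    have h1 : N l ≤ ∑ j, N j := Finset.single_le_sum (f := N) (fun _ _ => Nat.zero_le _)
      (Finset.mem_univ l)
    have h2 := Nat.mul_le_mul_left m h1
    simp only [S]
    omega
  have hP : ∀ j, D.PeriodicLabel j → N (D.Lam j) ≤ N j ∧ (D.edge (D.Phi j)).card = 1 ∧
      ∀ v w : (D.Sig (D.Phi j)).V, v = w := by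
    intro j hj
    refine ⟨hNp j hj, ?_, (hstable.2 j hj).1⟩
    have h1 := hstable.1 j hj
    have h2 := Finset.card_pos.2 (D.edge_nonempty (D.Phi j))
    unfold GluingData.CriticalLabel at h1
    omega
  let M : ℝ := 2 ^ Fintype.card G0.G.V
  have hM0 : 0 ≤ M := by positivity
  refine ⟨1 + 2 * 2 ^ S + 2 * ((2 * (2 : ℝ) ^ S) ^ k * (M * 3 ^ (k * S))), by positivity, ?_⟩
  intro n lam hz
  by_contra hcon
  push Not at hcon
  have p1 : 0 ≤ 2 * (2 : ℝ) ^ S := by positivity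
  have p2 : 0 ≤ 2 * ((2 * (2 : ℝ) ^ S) ^ k * (M * 3 ^ (k * S))) := by positivity
  have hl : 1 ≤ ‖lam‖ := by linarith
  have hlam : lam ≠ 0 := norm_pos_iff.1 (by linarith)
  obtain ⟨-, U, B, hB, β, hU, hsk, hzz⟩ := main_ind D N S V hV hP hNq hS hN1
    (by simp only [S]; omega) G0 hinj n
  refine skel_ne_zero N S U B β hsk lam (Win lam G0 fun _ => 1) d M hM0 hl ?_
    (by linarith) (by linarith) ?_
  · intro x
    obtain ⟨σ, h1, h2, h3⟩ := hd x
    exact win_bound G0 d x σ h1 h2 h3 lam hl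
  · rw [← sum_Zw]
    have : ∑ x, Zw lam ((D.RGraph)^[n] G0) (fun _ => 1) x = 0 := by
      rw [sum_Zw, ← hz]
      unfold wsum hcW Zfull
      simp only [mul_one]
    rw [← this]
    exact Finset.sum_congr rfl fun x _ => (hzz lam hlam x).symm

end
end

section
/- Let G be a finite simple graph with k distinct marked vertices v_1,…,v_k. For x ∈ {0,1}^k, say an independent set I of G agrees with x if, for each j, v_j ∈ I iff x_j = 1, and let M(x) denote the maximal cardinality of an independent set agreeing with x (assuming such sets exist). Suppose independent sets agreeing with (1,…,1) exist and M(1,…,1) − M(0,…,0) = k. Then for every x = (x_1,…,x_k) ∈ {0,1}^k, independent sets agreeing with x exist and M(x) − M(0,…,0) = x_1 + ⋯ + x_k. -/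
open scoped Classical
open Finset Filter

noncomputable section

-- STATEMENT 12
theorem stmt12 {V : Type} [Fintype V] [DecidableEq V] (G : SimpleGraph V)
    {k : ℕ} (v : Fin k → V) (hv : Function.Injective v)
    (M : (Fin k → Bool) → ℕ)
    (hM : ∀ x, M x = ((Finset.univ : Finset (Finset V)).filter
        (fun I : Finset V =>
          G.IsIndepSet' (↑I : Set V) ∧ ∀ j, v j ∈ I ↔ x j = true)).sup Finset.card)
    (hex1 : ∃ I : Finset V, G.IsIndepSet' (↑I : Set V) ∧ ∀ j, v j ∈ I ↔ oneT k j = true)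
    (hdiff : M (oneT k) = M (zeroT k) + k) :
    ∀ x : Fin k → Bool,
      (∃ I : Finset V, G.IsIndepSet' (↑I : Set V) ∧ ∀ j, v j ∈ I ↔ x j = true) ∧
        M x = M (zeroT k) + wt x := by
  intro x
  -- removing marked vertices from an independent set
  have key : ∀ (I : Finset V) (y z : Fin k → Bool), G.IsIndepSet' (↑I : Set V) →
      (∀ j, v j ∈ I ↔ y j = true) →
      (G.IsIndepSet' (↑(I \ (Finset.univ.filter fun j => z j = true).image v) : Set V) ∧
        ∀ j, v j ∈ I \ (Finset.univ.filter fun j => z j = true).image v ↔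
          (y j && !z j) = true) ∧
      I.card ≤ (I \ (Finset.univ.filter fun j => z j = true).image v).card + wt z := by
    intro I y z hI hy
    refine ⟨⟨?_, ?_⟩, ?_⟩
    · exact Set.Pairwise.mono (by exact_mod_cast Finset.sdiff_subset) hI
    · intro j
      rw [Finset.mem_sdiff, hy]
      simp [hv.eq_iff]
    · have h1 := Finset.le_card_sdiff ((Finset.univ.filter fun j => z j = true).image v) I
      have h2 : ((Finset.univ.filter fun j => z j = true).image v).card ≤ wt z :=
        Finset.card_image_le
      omega
  have hle : ∀ (I : Finset V) (y : Fin k → Bool), G.IsIndepSet' (↑I : Set V) →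
      (∀ j, v j ∈ I ↔ y j = true) → I.card ≤ M y := by
    intro I y hI hy
    rw [hM]
    exact Finset.le_sup (f := Finset.card) (by simp only [Finset.mem_filter, Finset.mem_univ, true_and]; exact ⟨hI, hy⟩)
  have hmax : ∃ I : Finset V, (G.IsIndepSet' (↑I : Set V) ∧ ∀ j, v j ∈ I ↔ oneT k j = true) ∧
      M (oneT k) = I.card := by
    obtain ⟨I, hI⟩ := hex1
    rw [hM]
    obtain ⟨J, hJ, hJ'⟩ := Finset.exists_mem_eq_sup _
      (⟨I, by simp only [Finset.mem_filter, Finset.mem_univ, true_and]; exact hI⟩ :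
        ((Finset.univ : Finset (Finset V)).filter (fun I : Finset V =>
          G.IsIndepSet' (↑I : Set V) ∧ ∀ j, v j ∈ I ↔ oneT k j = true)).Nonempty) Finset.card
    exact ⟨J, (Finset.mem_filter.1 hJ).2, hJ'⟩
  have hwt : wt x + wt (fun j => !x j) = k := by
    have := Finset.card_filter_add_card_filter_not (s := (Finset.univ : Finset (Fin k)))
      (fun j => x j = true)
    simpa [wt] using this
  obtain ⟨I, ⟨hI, hI1⟩, hIM⟩ := hmax
  obtain ⟨⟨hJ, hJx⟩, hJc⟩ := key I (oneT k) (fun j => !x j) hI hI1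
  have hJx' : ∀ j, v j ∈ I \ (Finset.univ.filter fun j => (!x j) = true).image v ↔
      x j = true := by
    intro j
    rw [hJx j]
    simp [oneT]
  refine ⟨⟨_, hJ, hJx'⟩, le_antisymm ?_ ?_⟩
  · rw [hM x]
    refine Finset.sup_le fun K hK => ?_
    obtain ⟨hK1, hK2⟩ := (Finset.mem_filter.1 hK).2
    obtain ⟨⟨hL, hLx⟩, hLc⟩ := key K x x hK1 hK2
    have := hle _ (zeroT k) hL (fun j => by rw [hLx j]; simp [zeroT])
    omega
  · have := hle _ x hJ hJx'
    omega

end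
end

section
/- Let G be a finite graph with k marked vertices v_1,…,v_k that is maximally independent. Then for every x ∈ {0,1}^k, the conditioned independence polynomial Z_G(λ, x) is a polynomial in λ of degree #I(0,…,0) + (x_1 + ⋯ + x_k) with leading coefficient 1. Consequently, for every x ∈ {0,1}^k, λ^{−(x_1+⋯+x_k)} · Z_G(λ, x) / Z_G(λ, (0,…,0)) → 1 as |λ| → ∞; equivalently, the point of ℙ^{2^k−1} with homogeneous coordinates (λ^{−(x_1+⋯+x_k)} Z_G(λ, x))_{x∈{0,1}^k} converges to [1 : ⋯ : 1] as |λ| → ∞. -/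
open scoped Classical
open Finset Filter

noncomputable section

lemma aux_card {k : ℕ} (A : MarkedGraph k) (hmax : MaxIndependent A) (x : Fin k → Bool)
    (I₀ I : Finset A.G.V)
    (h0 : (A.G.IndepFinset I₀ ∧ Agrees A I₀ (zeroT k)) ∧
        ∀ J, A.G.IndepFinset J ∧ Agrees A J (zeroT k) → J.card ≤ I₀.card)
    (hI : (A.G.IndepFinset I ∧ Agrees A I x) ∧
        ∀ J, A.G.IndepFinset J ∧ Agrees A J x → J.card ≤ I.card) :
    I.card = I₀.card + wt x := by
  obtain ⟨I₁, h1, h1m, -⟩ := hmax.1 (oneT k)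
  have hk := hmax.2 I₁ I₀ ⟨h1, h1m⟩ h0
  have hinj : Function.Injective A.mark := by
    intro i j hij
    by_contra hne
    obtain ⟨J, ⟨-, hJ⟩, -⟩ := hmax.1 (unitT i)
    have a := (hJ i).2 (by simp [unitT])
    rw [hij] at a
    have b := (hJ j).1 a
    simp [unitT] at b
    exact hne b.symm
  have sub : ∀ (J S : Finset A.G.V), A.G.IndepFinset J → A.G.IndepFinset (J \ S) := by
    intro J S hJ v hv w hw
    exact hJ v (Finset.mem_sdiff.1 hv).1 w (Finset.mem_sdiff.1 hw).1
  have e1 : I.card ≤ I₀.card + wt x := by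
    have := h0.2 (I \ (univ.filter fun j => x j = true).image A.mark) ⟨sub _ _ hI.1.1, by
      intro j
      rw [Finset.mem_sdiff]
      simp only [mem_image, mem_filter, mem_univ, true_and, zeroT]
      constructor
      · rintro ⟨a, b⟩
        exact absurd ⟨j, (hI.1.2 j).1 a, rfl⟩ b
      · simp⟩
    have h2 := le_card_sdiff ((univ.filter fun j => x j = true).image A.mark) I
    have h3 : ((univ.filter fun j => x j = true).image A.mark).card ≤ wt x := card_image_le
    omega
  have e2 : I₁.card + wt x ≤ I.card + k := by
    have := hI.2 (I₁ \ (univ.filter fun j => ¬ x j = true).image A.mark) ⟨sub _ _ h1.1, by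
      intro j
      simp only [Finset.mem_sdiff, mem_image, mem_filter, mem_univ, true_and]
      have := (h1.2 j).2 rfl
      constructor
      · rintro ⟨a, b⟩
        by_contra hx
        exact b ⟨j, hx, rfl⟩
      · intro hx
        refine ⟨this, ?_⟩
        rintro ⟨i, hi, hij⟩
        rw [hinj hij] at hi
        exact hi hx⟩
    have h2 := le_card_sdiff ((univ.filter fun j => ¬ x j = true).image A.mark) I₁
    have h3 : ((univ.filter fun j => ¬ x j = true).image A.mark).card ≤
      (univ.filter fun j => ¬ x j = true).card := card_image_le
    have h4 := card_filter_add_card_filter_not (s := (univ : Finset (Fin k))) (fun j => x j = true)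
    rw [card_univ, Fintype.card_fin] at h4
    unfold wt
    omega
  omega

lemma aux_poly {k : ℕ} (A : MarkedGraph k) (x : Fin k → Bool) (I : Finset A.G.V)
    (hI : A.G.IndepFinset I ∧ Agrees A I x)
    (hm : ∀ J, A.G.IndepFinset J ∧ Agrees A J x → J.card ≤ I.card)
    (hu : ∀ J, A.G.IndepFinset J ∧ Agrees A J x → J.card = I.card → J = I) :
    (Zcond (Polynomial ℂ) Polynomial.X A.G A.mark x).natDegree = I.card ∧
      (Zcond (Polynomial ℂ) Polynomial.X A.G A.mark x).Monic := by
  have key : ∃ q : Polynomial ℂ, q.degree < (I.card : ℕ) ∧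
      Zcond (Polynomial ℂ) Polynomial.X A.G A.mark x = Polynomial.X ^ I.card + q := by
    let τ : A.G.V → Bool := fun v => decide (v ∈ I)
    have hτ : A.G.Indep τ ∧ ∀ j, τ (A.mark j) = x j := by
      refine ⟨?_, ?_⟩
      · rintro v w h ⟨a, b⟩
        exact hI.1 v (by simpa [τ] using a) w (by simpa [τ] using b) h
      · intro j
        have := hI.2 j
        rw [Bool.eq_iff_iff]
        simpa [τ] using this
    have ho : A.G.ones τ = I.card := by
      unfold MGraph.ones
      congr 1
      ext v
      simp [τ]
    refine ⟨∑ σ ∈ univ.erase τ, if A.G.Indep σ ∧ (∀ j, σ (A.mark j) = x j) then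
      Polynomial.X ^ A.G.ones σ else 0, ?_,
      (Finset.add_sum_erase univ _ (mem_univ τ)).symm.trans ?_⟩
    rotate_left
    · rw [if_pos hτ, ho]
    · refine lt_of_le_of_lt (Polynomial.degree_sum_le _ _) ?_
      rw [Finset.sup_lt_iff (by exact WithBot.bot_lt_coe _)]
      intro σ hσ
      split_ifs with hc
      · rw [Polynomial.degree_X_pow]
        have hJ : A.G.IndepFinset (univ.filter fun v => σ v = true) ∧
            Agrees A (univ.filter fun v => σ v = true) x := by
          refine ⟨?_, ?_⟩
          · intro v hv w hw h
            exact hc.1 v w h ⟨by simpa using hv, by simpa using hw⟩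
          · intro j
            simp [hc.2 j]
        have h1 := hm _ hJ
        have h2 : A.G.ones σ ≠ I.card := by
          intro h
          have h3 := hu _ hJ h
          apply (mem_erase.1 hσ).1
          funext v
          rw [Bool.eq_iff_iff]
          simp [τ, ← h3]
        have h5 : A.G.ones σ < I.card := lt_of_le_of_ne h1 h2
        exact_mod_cast h5
      · rw [Polynomial.degree_zero]
        exact WithBot.bot_lt_coe _
  obtain ⟨q, hq, he⟩ := key
  rw [he]
  refine ⟨?_, Polynomial.monic_X_pow_add hq⟩
  rw [Polynomial.natDegree_eq_of_degree_eq_some]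
  rw [Polynomial.degree_add_eq_left_of_degree_lt, Polynomial.degree_X_pow]
  rwa [Polynomial.degree_X_pow]

lemma aux_eval {k : ℕ} (A : MarkedGraph k) (x : Fin k → Bool) (z : ℂ) :
    A.Z ℂ z x = (Zcond (Polynomial ℂ) Polynomial.X A.G A.mark x).eval z := by
  unfold MarkedGraph.Z Zcond
  rw [Polynomial.eval_finsetSum]
  refine sum_congr rfl fun σ _ => ?_
  split_ifs <;> simp

lemma aux_tendsto (p : Polynomial ℂ) (hp : p.Monic) :
    Tendsto (fun z : ℂ => p.eval z / z ^ p.natDegree) (Bornology.cobounded ℂ) (nhds 1) := by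
  have h1 : Tendsto (fun z : ℂ => p.reverse.eval z⁻¹) (Bornology.cobounded ℂ) (nhds 1) := by
    have h := (p.reverse.continuous.tendsto 0).comp (tendsto_inv₀_cobounded (α := ℂ))
    rwa [← Polynomial.coeff_zero_eq_eval_zero, Polynomial.coeff_zero_reverse,
      hp.leadingCoeff] at h
  refine h1.congr' ?_
  filter_upwards [Bornology.eventually_ne_cobounded (0 : ℂ)] with z hz
  rw [eq_div_iff (pow_ne_zero _ hz)]
  let _ : Invertible z := invertibleOfNonzero hz
  have := Polynomial.eval₂_reverse_mul_pow (RingHom.id ℂ) z p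
  simpa [Polynomial.eval₂_id] using this

-- STATEMENT 13
theorem stmt13 {k : ℕ} (A : MarkedGraph k) (hmax : MaxIndependent A) :
    (∀ (x : Fin k → Bool) (I₀ : Finset A.G.V),
      ((A.G.IndepFinset I₀ ∧ Agrees A I₀ (zeroT k)) ∧
        ∀ J, A.G.IndepFinset J ∧ Agrees A J (zeroT k) → J.card ≤ I₀.card) →
      (Zcond (Polynomial ℂ) Polynomial.X A.G A.mark x).natDegree = I₀.card + wt x ∧
        (Zcond (Polynomial ℂ) Polynomial.X A.G A.mark x).Monic) ∧
    ∀ x : Fin k → Bool,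
      Filter.Tendsto (fun lam : ℂ => A.Z ℂ lam x / (lam ^ wt x * A.Z ℂ lam (zeroT k)))
        (Filter.comap (fun z : ℂ => ‖z‖) Filter.atTop) (nhds 1) := by
  refine ⟨?_, ?_⟩
  · intro x I₀ h0
    obtain ⟨I, hI, hm, hu⟩ := hmax.1 x
    rw [← aux_card A hmax x I₀ I h0 ⟨hI, hm⟩]
    exact aux_poly A x I hI hm hu
  · intro x
    obtain ⟨I, hI, hm, hu⟩ := hmax.1 x
    obtain ⟨I₀, hI₀, hm₀, hu₀⟩ := hmax.1 (zeroT k)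
    have hc := aux_card A hmax x I₀ I ⟨hI₀, hm₀⟩ ⟨hI, hm⟩
    obtain ⟨d, p⟩ := aux_poly A x I hI hm hu
    obtain ⟨d₀, p₀⟩ := aux_poly A (zeroT k) I₀ hI₀ hm₀ hu₀
    have t := (aux_tendsto _ p).div (aux_tendsto _ p₀) one_ne_zero
    rw [comap_norm_atTop]
    rw [div_one] at t
    refine t.congr' ?_
    filter_upwards [Bornology.eventually_ne_cobounded (0 : ℂ)] with z hz
    simp only [Pi.div_apply]
    rw [aux_eval, aux_eval, d, d₀, hc, pow_add]
    have hz1 : z ^ I₀.card ≠ 0 := pow_ne_zero _ hz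
    have hz2 : z ^ wt x ≠ 0 := pow_ne_zero _ hz
    field_simp

end
end

section
/- Let P_n denote the path graph on n vertices and Z_{P_n}(λ) its independence polynomial. Then every complex zero of Z_{P_n} is a negative real number, and the zeros are unbounded over the family of all paths: for every M > 0 there exist n ∈ ℕ and λ ∈ ℝ with λ < 0, Z_{P_n}(λ) = 0, and |λ| > M. -/
open scoped Classical
open Finset Filter

noncomputable section

/-- Sum over independent subsets of `{0, …, n-1}` in the path. -/
def pathS (x : ℂ) (n : ℕ) : ℂ :=
  ∑ I ∈ (Finset.range n).powerset, if (∀ i ∈ I, i + 1 ∉ I) then x ^ I.card else 0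

lemma eval_path_eq (x : ℂ) (n : ℕ) :
    (indepPoly (SimpleGraph.pathGraph n)).eval x = pathS x n := by
  unfold indepPoly pathS
  rw [Polynomial.eval_finsetSum]
  refine Finset.sum_bij (fun I _ => I.map Fin.valEmbedding) ?_ ?_ ?_ ?_
  · intro I _
    rw [Finset.mem_powerset]
    intro i hi
    simp only [Finset.mem_map, Fin.valEmbedding_apply] at hi
    obtain ⟨a, _, rfl⟩ := hi
    simp
  · intro I _ J _ h
    exact Finset.map_injective _ h
  · intro J hJ
    rw [Finset.mem_powerset] at hJ
    refine ⟨Finset.univ.filter (fun a : Fin n => (a : ℕ) ∈ J), Finset.mem_univ _, ?_⟩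
    ext i
    simp only [Finset.mem_map, Finset.mem_filter, Finset.mem_univ, true_and,
      Fin.valEmbedding_apply]
    constructor
    · rintro ⟨a, ha, rfl⟩
      exact ha
    · intro hi
      exact ⟨⟨i, Finset.mem_range.1 (hJ hi)⟩, hi, rfl⟩
  · intro I _
    have key : (SimpleGraph.pathGraph n).IsIndepSet' (↑I : Set (Fin n)) ↔
        ∀ i ∈ I.map Fin.valEmbedding, i + 1 ∉ I.map Fin.valEmbedding := by
      unfold SimpleGraph.IsIndepSet' Set.Pairwise
      simp only [SimpleGraph.pathGraph_adj, Finset.mem_map, Fin.valEmbedding_apply,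
        Finset.mem_coe]
      constructor
      · rintro h i ⟨a, ha, rfl⟩ ⟨b, hb, hab⟩
        refine h ha hb ?_ (Or.inl hab.symm)
        rintro rfl
        omega
      · rintro h a ha b hb _ (hab | hab)
        · exact h a ⟨a, ha, rfl⟩ ⟨b, hb, hab.symm⟩
        · exact h b ⟨b, hb, rfl⟩ ⟨a, ha, hab.symm⟩
    by_cases h : (SimpleGraph.pathGraph n).IsIndepSet' (↑I : Set (Fin n))
    · rw [if_pos h, if_pos (key.1 h)]
      simp
    · rw [if_neg h, if_neg (fun h' => h (key.2 h'))]
      simp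

lemma pathS_zero (x : ℂ) : pathS x 0 = 1 := by
  simp [pathS]

lemma pathS_one (x : ℂ) : pathS x 1 = 1 + x := by
  unfold pathS
  rw [Finset.range_add_one, Finset.sum_powerset_insert (by simp)]
  simp

lemma pathS_rec (x : ℂ) (n : ℕ) : pathS x (n + 2) = pathS x (n + 1) + x * pathS x n := by
  have e : pathS x (n + 2) = pathS x (n + 1) + ∑ I ∈ (Finset.range (n + 1)).powerset,
      if (∀ i ∈ insert (n + 1) I, i + 1 ∉ insert (n + 1) I)
        then x ^ (insert (n + 1) I).card else 0 := by
    unfold pathS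
    rw [Finset.range_add_one (n := n + 1), Finset.sum_powerset_insert (by simp)]
  rw [e]
  congr 1
  rw [Finset.range_add_one, Finset.sum_powerset_insert (by simp)]
  have z : ∑ I ∈ (Finset.range n).powerset,
      (if (∀ i ∈ insert (n + 1) (insert n I), i + 1 ∉ insert (n + 1) (insert n I))
        then x ^ (insert (n + 1) (insert n I)).card else 0) = 0 := by
    refine Finset.sum_eq_zero fun I _ => if_neg ?_
    intro h
    exact h n (by simp) (by simp)
  rw [z, add_zero, pathS, Finset.mul_sum]
  refine Finset.sum_congr rfl fun I hI => ?_
  rw [Finset.mem_powerset] at hI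
  have hlt : ∀ i ∈ I, i < n := fun i hi => Finset.mem_range.1 (hI hi)
  have hn : n + 1 ∉ I := fun h => by have := hlt _ h; omega
  have key : (∀ i ∈ insert (n + 1) I, i + 1 ∉ insert (n + 1) I) ↔ ∀ i ∈ I, i + 1 ∉ I := by
    constructor
    · intro h i hi hi'
      exact h i (Finset.mem_insert_of_mem hi) (Finset.mem_insert_of_mem hi')
    · intro h i hi hi'
      rw [Finset.mem_insert] at hi hi'
      rcases hi with rfl | hi
      · rcases hi' with h1 | h1
        · omega
        · have := hlt _ h1
          omega
      · rcases hi' with h1 | h1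
        · have := hlt _ hi
          omega
        · exact h i hi h1
  by_cases h : ∀ i ∈ I, i + 1 ∉ I
  · rw [if_pos h, if_pos (key.2 h), Finset.card_insert_of_notMem hn, pow_succ, mul_comm]
  · rw [if_neg h, if_neg (fun h' => h (key.1 h')), mul_zero]

lemma pathS_closed (a b : ℂ) (hab : a + b = 1) (n : ℕ) :
    (a - b) * pathS (-(a * b)) n = a ^ (n + 2) - b ^ (n + 2) := by
  have hb : b = 1 - a := by linear_combination hab
  induction n using Nat.twoStepInduction with
  | zero => rw [pathS_zero, hb]; ring
  | one => rw [pathS_one, hb]; ring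
  | more n h1 h2 =>
    rw [pathS_rec, mul_add, mul_left_comm, h1, h2, hb]
    ring

lemma path_zero_neg (n : ℕ) (lam : ℂ) (h : pathS lam n = 0) :
    ∃ r : ℝ, r < 0 ∧ lam = (r : ℂ) := by
  obtain ⟨s, hs⟩ := IsAlgClosed.exists_pow_nat_eq (1 + 4 * lam) (n := 2) (by norm_num)
  set a : ℂ := (1 + s) / 2 with ha
  set b : ℂ := (1 - s) / 2 with hb
  have hab : a + b = 1 := by rw [ha, hb]; ring
  have hl : lam = -(a * b) := by rw [ha, hb]; linear_combination -hs / 4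
  have hc := pathS_closed a b hab n
  rw [← hl, h, mul_zero] at hc
  have hp : a ^ (n + 2) = b ^ (n + 2) := (sub_eq_zero.1 hc.symm)
  have hnorm : ‖a‖ = ‖b‖ := by
    have : ‖a‖ ^ (n + 2) = ‖b‖ ^ (n + 2) := by rw [← norm_pow, ← norm_pow, hp]
    exact (pow_left_inj₀ (norm_nonneg _) (norm_nonneg _) (by omega)).1 this
  have hsq : Complex.normSq a = Complex.normSq b := by
    rw [Complex.normSq_eq_norm_sq, Complex.normSq_eq_norm_sq, hnorm]
  have hre : a.re + b.re = 1 := by simpa using congrArg Complex.re hab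
  have him : a.im + b.im = 0 := by simpa using congrArg Complex.im hab
  rw [Complex.normSq_apply, Complex.normSq_apply] at hsq
  have hbi : b.im = -a.im := by linarith
  have hbr : b.re = a.re := by
    have h1 : b.re = 1 - a.re := by linarith
    rw [hbi, h1] at hsq
    rw [h1]
    linarith
  have har : a.re = 1 / 2 := by linarith
  refine ⟨-(a.re * a.re + a.im * a.im), ?_, ?_⟩
  · rw [har]
    nlinarith [mul_self_nonneg a.im]
  · rw [hl]
    apply Complex.ext
    · rw [Complex.neg_re, Complex.mul_re, Complex.ofReal_re, hbr, hbi]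
      ring
    · rw [Complex.neg_im, Complex.mul_im, Complex.ofReal_im, hbr, hbi]
      ring

lemma path_zero_large (M : ℝ) (hM : 0 < M) : ∃ (n : ℕ) (r : ℝ), r < 0 ∧
    pathS ((r : ℝ) : ℂ) n = 0 ∧ M < |r| := by
  obtain ⟨m, hm⟩ := exists_nat_gt (4 * (M + 1))
  have hm0 : (4 : ℝ) < m := by linarith
  -- `N = 2 m + 3`, `δ = π / (2 N)`, `θ = π / 2 - δ`
  set N : ℝ := 2 * m + 3 with hN
  have hNpos : 0 < N := by linarith
  set d : ℝ := Real.pi / (2 * N) with hd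
  have hdpos : 0 < d := by have := Real.pi_pos; positivity
  have hdN : d * N = Real.pi / 2 := by rw [hd]; field_simp
  have hdle : d < 2 / N := by
    rw [hd, div_lt_div_iff₀ (by positivity) hNpos]
    nlinarith [Real.pi_lt_four]
  have hdpi : d < Real.pi / 2 := by nlinarith
  set c : ℝ := Real.sin d with hc
  have hcpos : 0 < c := Real.sin_pos_of_pos_of_lt_pi hdpos (by linarith)
  have hcle : c < 2 / N := (Real.sin_lt hdpos).trans hdle
  have hqpos : 0 < Real.cos d := Real.cos_pos_of_mem_Ioo ⟨by linarith, hdpi⟩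
  set q : ℝ := Real.cos d with hq
  have hcq : c ^ 2 + q ^ 2 = 1 := Real.sin_sq_add_cos_sq d
  have hC0 : (c : ℂ) ≠ 0 := by exact_mod_cast hcpos.ne'
  have hcqC : (c : ℂ) ^ 2 + (q : ℂ) ^ 2 = 1 := by exact_mod_cast hcq
  set a : ℂ := (c + q * Complex.I) / (2 * c) with ha
  set b : ℂ := (c - q * Complex.I) / (2 * c) with hb
  have hab : a + b = 1 := by rw [ha, hb]; field_simp; ring
  have hmul : -(a * b) = ((-(1 / (4 * c ^ 2)) : ℝ) : ℂ) := by
    rw [ha, hb]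
    push_cast
    field_simp
    linear_combination (-4 : ℂ) * hcqC + 4 * (q : ℂ) ^ 2 * Complex.I_sq
  have hne : a - b ≠ 0 := by
    have : a - b = q * Complex.I / c := by rw [ha, hb]; field_simp; ring
    rw [this]
    have hq0 : (q : ℂ) ≠ 0 := by exact_mod_cast hqpos.ne'
    exact div_ne_zero (mul_ne_zero hq0 Complex.I_ne_zero) hC0
  refine ⟨2 * m + 1, -(1 / (4 * c ^ 2)), ?_, ?_, ?_⟩
  · have : 0 < 1 / (4 * c ^ 2) := by positivity
    linarith
  · have hcl := pathS_closed a b hab (2 * m + 1)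
    rw [hmul] at hcl
    have hzero : a ^ (2 * m + 1 + 2) - b ^ (2 * m + 1 + 2) = 0 := by
      have hE1 : (c : ℂ) + q * Complex.I = Complex.exp (((Real.pi / 2 - d : ℝ) : ℂ) * Complex.I) := by
        rw [Complex.exp_mul_I, ← Complex.ofReal_cos, ← Complex.ofReal_sin,
          Real.cos_pi_div_two_sub, Real.sin_pi_div_two_sub]
      have hE2 : (c : ℂ) - q * Complex.I = Complex.exp (-(((Real.pi / 2 - d : ℝ) : ℂ) * Complex.I)) := by
        rw [← neg_mul, ← Complex.ofReal_neg, Complex.exp_mul_I, ← Complex.ofReal_cos,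
          ← Complex.ofReal_sin, Real.cos_neg, Real.sin_neg,
          Real.cos_pi_div_two_sub, Real.sin_pi_div_two_sub, Complex.ofReal_neg]
        ring
      rw [ha, hb, div_pow, div_pow, hE1, hE2, ← Complex.exp_nat_mul, ← Complex.exp_nat_mul,
        sub_eq_zero]
      congr 1
      rw [Complex.exp_eq_exp_iff_exists_int]
      refine ⟨(m : ℤ) + 1, ?_⟩
      have hdNC : (d : ℂ) * (2 * m + 3) = (Real.pi : ℂ) / 2 := by
        have := congrArg (fun t : ℝ => (t : ℂ)) hdN
        simp only [hN] at this
        push_cast at this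
        exact this
      push_cast
      linear_combination (-2 * Complex.I) * hdNC
    rw [hzero] at hcl
    exact (mul_eq_zero.1 hcl).resolve_left hne
  · rw [abs_neg, abs_of_pos (by positivity), lt_div_iff₀ (by positivity)]
    have h1 : c * N < 2 := (lt_div_iff₀ hNpos).1 hcle
    have h2 : (c * N) ^ 2 < 4 := by nlinarith [mul_pos hcpos hNpos]
    have h3 : 16 * M < N ^ 2 := by nlinarith
    have h4 : 0 < c ^ 2 := by positivity
    nlinarith [mul_lt_mul_of_pos_left h3 h4]

-- STATEMENT 15
theorem stmt15 :
    (∀ (n : ℕ) (lam : ℂ), (indepPoly (SimpleGraph.pathGraph n)).eval lam = 0 →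
      ∃ r : ℝ, r < 0 ∧ lam = (r : ℂ)) ∧
    ∀ M : ℝ, 0 < M → ∃ (n : ℕ) (r : ℝ), r < 0 ∧
      (indepPoly (SimpleGraph.pathGraph n)).eval ((r : ℝ) : ℂ) = 0 ∧ M < |r| := by
  refine ⟨fun n lam h => path_zero_neg n lam ((eval_path_eq lam n).symm.trans h), ?_⟩
  intro M hM
  obtain ⟨n, r, h1, h2, h3⟩ := path_zero_large M hM
  exact ⟨n, r, h1, (eval_path_eq _ n).trans h2, h3⟩

end
end
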